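/- arXiv:2311.04203 — 7 statements merged into one kernel-verified Lean document; each statement's English description precedes it below -/
import Mathlib

section
/- For every n ≥ 1, the number of distinct families ℬ of subsets of [n] that are basis families of loopless Schubert matroids on [n] equals n!. -/
/-!
Read `S` along `w` as a 0/1 word. Its prefix-count conditions matter only where a run of zeros ends,
so the basis family depends only on the factorization of the word into blocks `1^a 0^b`, where each
block occupies a set of elements without internal order. The matroid is loopless exactly when the
word starts with `1`, and then `a, b ≥ 1` in every block, except that the last block may have `b = 0`
(coloops). Such data is encoded by the function `φ` sending `i` to the position at which the block of
`i` switches from `1` to `0`; the functions that occur are the good ones (`Good n univ`).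

The family determines `φ`: the preorder `φ i ≤ φ j` means that `i` may be exchanged for `j` in every
basis (`le_iff_exchange`), hence the blocks and a sorting permutation `w` are known, and for fixed
`w` the set `S` is the Gale-least basis. So the task is to count good functions.

Let `d F` be the number of good functions on `F` without coloops. Splitting off the last block `P`
gives `d E = ∑_{P ≠ ∅} (#P - 1) d (E \ P)` for nonempty `E`, and the number of all good
functions on `E` is `∑_P #P d (E \ P)`. By the first identity the latter equals `A E = ∑_P d (E \ P)`, while marking an
element of `P` shows that it equals `∑_{x ∈ E} A (E \ {x})`. Hence `A E = (#E)!` by induction.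
-/

open Finset

/-- The Gale order on equal-cardinality subsets induced by a permutation `w`:
`S ≤_w T` iff for every `j` the number of elements of `S` that are `≤_w j` is at
least the number of elements of `T` that are `≤_w j`, where `i ≤_w j` iff
`w⁻¹ i ≤ w⁻¹ j`. -/
def galeLE {n : ℕ} (w : Equiv.Perm (Fin n)) (S T : Finset (Fin n)) : Prop :=
  ∀ j : Fin n, (T.filter fun t => w.symm t ≤ w.symm j).card ≤
    (S.filter fun s => w.symm s ≤ w.symm j).card

/-- `ℬ` is the basis family of a Schubert matroid on `[n]`. -/
def IsSchubertFamily {n : ℕ} (ℬ : Set (Finset (Fin n))) : Prop :=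
  ∃ (w : Equiv.Perm (Fin n)) (S : Finset (Fin n)),
    ℬ = {T : Finset (Fin n) | T.card = S.card ∧ galeLE w S T}

/-- A family of subsets of `[n]` is loopless if every `i ∈ [n]` lies in some member. -/
def FamLoopless {n : ℕ} (ℬ : Set (Finset (Fin n))) : Prop :=
  ∀ i : Fin n, ∃ B ∈ ℬ, i ∈ B

/-! ### Counting good functions -/

section Counting

variable {α : Type*} [DecidableEq α]

/-- A function, supported on `E`, whose level set with value `v` consists of `s` elements lying above
`l` elements of smaller value, with `l < v < l + s` or `l < v = N`. With `N = #E` such functions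
encode loopless Schubert matroids on `E`; with `N = 0` those that moreover have no coloop. -/
def Good (N : ℕ) (E : Finset α) (φ : α → ℕ) : Prop :=
  (∀ i ∉ E, φ i = 0) ∧ ∀ i ∈ E, #{j ∈ E | φ j < φ i} < φ i ∧
    (φ i < #{j ∈ E | φ j ≤ φ i} ∨ φ i = N)

lemma Good.le_max {N : ℕ} {E : Finset α} {φ : α → ℕ} (h : Good N E φ) (i : α) :
    φ i ≤ max N #E := by
  by_cases hi : i ∈ E
  · rcases (h.2 i hi).2 with h1 | h1
    · exact (h1.le.trans (card_filter_le _ _)).trans (le_max_right _ _)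
    · omega
  · simp [h.1 i hi]

open Classical in
/-- The good functions as a finset; the bound on the values is automatic (`Good.le_max`). -/
noncomputable def goods [Fintype α] (N : ℕ) (E : Finset α) : Finset (α → ℕ) :=
  {φ ∈ Fintype.piFinset fun _ : α => range (max N #E + 1) | Good N E φ}

lemma mem_goods [Fintype α] {N : ℕ} {E : Finset α} {φ : α → ℕ} :
    φ ∈ goods N E ↔ Good N E φ := by
  simp only [goods, mem_filter, Fintype.mem_piFinset, mem_range, and_iff_right_iff_imp]
  intro h i
  have := h.le_max i
  omega

/-- The level set of the maximal value of `φ`. -/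
def topBlock (E : Finset α) (φ : α → ℕ) : Finset α := {i ∈ E | φ i = E.sup φ}

/-- Removing the top level set leaves a good function without coloops. -/
lemma good_split {N : ℕ} {E : Finset α} (hN : N = 0 ∨ N = #E) (hE : E.Nonempty) {φ : α → ℕ}
    (h : Good N E φ) :
    (topBlock E φ).Nonempty ∧ #(E \ topBlock E φ) < E.sup φ ∧
      (E.sup φ < #E ∨ E.sup φ = N) ∧
      Good 0 (E \ topBlock E φ) (fun i => if i ∈ topBlock E φ then 0 else φ i) := by
  obtain ⟨m, hm, hmax⟩ := exists_mem_eq_sup E hE φ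
  have hle : ∀ i ∈ E, φ i ≤ φ m := fun i hi => hmax ▸ le_sup hi
  have hmem : ∀ i, i ∈ topBlock E φ ↔ i ∈ E ∧ φ i = φ m := by simp [topBlock, hmax]
  rw [hmax]
  have hlt : E \ topBlock E φ = {j ∈ E | φ j < φ m} := by
    ext j; simp only [mem_sdiff, hmem, mem_filter]
    constructor
    · rintro ⟨h1, h2⟩; have := hle j h1; exact ⟨h1, by grind⟩
    · rintro ⟨h1, h2⟩; exact ⟨h1, by grind⟩
  have hall : {j ∈ E | φ j ≤ φ m} = E := filter_true_of_mem hle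
  obtain ⟨h1, h2⟩ := h.2 m hm
  rw [hall] at h2
  refine ⟨⟨m, (hmem m).2 ⟨hm, rfl⟩⟩, by rwa [hlt], h2, ?_, ?_⟩
  · intro i hi
    by_cases hiE : i ∈ E
    · have : i ∈ topBlock E φ := by simpa [hiE] using hi
      simp [this]
    · simp [h.1 i hiE]
  · intro i hi
    have hi' := hi
    rw [hlt, mem_filter] at hi'
    obtain ⟨hiE, him⟩ := hi'
    have hit : i ∉ topBlock E φ := (mem_sdiff.1 hi).2
    have e1 : {j ∈ E \ topBlock E φ | (if j ∈ topBlock E φ then 0 else φ j) < φ i}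
        = {j ∈ E | φ j < φ i} := by
      ext j; simp only [mem_filter, mem_sdiff, hmem]; grind
    have e2 : {j ∈ E \ topBlock E φ | (if j ∈ topBlock E φ then 0 else φ j) ≤ φ i}
        = {j ∈ E | φ j ≤ φ i} := by
      ext j; simp only [mem_filter, mem_sdiff, hmem]; grind
    simp only [hit, if_false]
    rw [e1, e2]
    obtain ⟨h3, h4⟩ := h.2 i hiE
    refine ⟨h3, Or.inl ?_⟩
    rcases h4 with h4 | h4
    · exact h4
    · omega

lemma good_glue {N : ℕ} {E P : Finset α} (hP : P ⊆ E) (hne : P.Nonempty) {v : ℕ} {ψ : α → ℕ}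
    (hv : #(E \ P) < v) (hv' : v < #E ∨ v = N) (h : Good 0 (E \ P) ψ) :
    Good N E (fun i => if i ∈ P then v else ψ i) ∧
      E.sup (fun i => if i ∈ P then v else ψ i) = v ∧
      topBlock E (fun i => if i ∈ P then v else ψ i) = P := by
  have hψ : ∀ i, ψ i < v := fun i => by
    have := h.le_max i; omega
  have hsup : E.sup (fun i => if i ∈ P then v else ψ i) = v := by
    apply le_antisymm
    · refine Finset.sup_le fun i _ => ?_
      have := hψ i
      split_ifs <;> omega
    · obtain ⟨m, hm⟩ := hne
      simpa [hm] using le_sup (f := fun i => if i ∈ P then v else ψ i) (hP hm)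
  refine ⟨⟨?_, ?_⟩, hsup, ?_⟩
  · intro i hi
    have : i ∉ P := fun h => hi (hP h)
    simp [this, h.1 i (by simp [hi])]
  · intro i hi
    by_cases hiP : i ∈ P
    · have e1 : {j ∈ E | (if j ∈ P then v else ψ j) < v} = E \ P := by
        ext j; have := hψ j; simp only [mem_filter, mem_sdiff]; grind
      have e2 : {j ∈ E | (if j ∈ P then v else ψ j) ≤ v} = E := by
        ext j; have := hψ j; simp only [mem_filter]; grind
      simp only [hiP, if_true]
      rw [e1, e2]
      exact ⟨hv, hv'⟩
    · have e1 : {j ∈ E | (if j ∈ P then v else ψ j) < ψ i} = {j ∈ E \ P | ψ j < ψ i} := by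
        ext j; have := hψ i; simp only [mem_filter, mem_sdiff]; grind
      have e2 : {j ∈ E | (if j ∈ P then v else ψ j) ≤ ψ i} = {j ∈ E \ P | ψ j ≤ ψ i} := by
        ext j; have := hψ i; simp only [mem_filter, mem_sdiff]; grind
      simp only [hiP, if_false]
      rw [e1, e2]
      obtain ⟨h3, h4⟩ := h.2 i (by simp [hi, hiP])
      exact ⟨h3, Or.inl (by omega)⟩
  · ext i
    have := hψ i
    simp only [topBlock, hsup, mem_filter]
    have := @hP i
    grind

/-- A good function amounts to its top level set `P`, its maximal value `v`, and a good function
without coloops on `E \ P`. -/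
lemma card_goods [Fintype α] {N : ℕ} {E : Finset α} (hN : N = 0 ∨ N = #E) (hE : E.Nonempty) :
    #(goods N E) = ∑ P ∈ E.powerset.erase ∅,
      #{v ∈ Ioc #(E \ P) #E | v < #E ∨ v = N} * #(goods 0 (E \ P)) := by
  simp_rw [← card_product]
  rw [← card_sigma]
  refine card_nbij' (fun φ => ⟨topBlock E φ, E.sup φ, fun i => if i ∈ topBlock E φ then 0 else φ i⟩)
    (fun x => fun i => if i ∈ x.1 then x.2.1 else x.2.2 i) ?_ ?_ ?_ ?_
  · intro φ hφ
    obtain ⟨h1, h2, h3, h4⟩ := good_split hN hE (mem_goods.1 hφ)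
    simp only [coe_sigma, Set.mem_sigma_iff, mem_coe, mem_erase, mem_powerset, mem_product,
      mem_filter, mem_Ioc, mem_goods]
    exact ⟨⟨h1.ne_empty, filter_subset _ _⟩, ⟨⟨h2, by omega⟩, h3⟩, h4⟩
  · rintro ⟨P, v, ψ⟩ hx
    simp only [coe_sigma, Set.mem_sigma_iff, mem_coe, mem_erase, mem_powerset, mem_product,
      mem_filter, mem_Ioc, mem_goods] at hx
    obtain ⟨⟨h0, h1⟩, ⟨⟨h2, -⟩, h3⟩, h4⟩ := hx
    exact mem_goods.2 (good_glue h1 (nonempty_iff_ne_empty.2 h0) h2 h3 h4).1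
  · intro φ hφ
    funext i
    have : i ∈ topBlock E φ → φ i = E.sup φ := fun h => (mem_filter.1 h).2
    dsimp only
    split_ifs with h
    · exact (this h).symm
    · rfl
  · rintro ⟨P, v, ψ⟩ hx
    simp only [coe_sigma, Set.mem_sigma_iff, mem_coe, mem_erase, mem_powerset, mem_product,
      mem_filter, mem_Ioc, mem_goods] at hx
    obtain ⟨⟨h0, h1⟩, ⟨⟨h2, -⟩, h3⟩, h4⟩ := hx
    obtain ⟨-, h5, h6⟩ := good_glue h1 (nonempty_iff_ne_empty.2 h0) h2 h3 h4
    simp only [h5, h6]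
    congr 2
    funext i
    by_cases hi : i ∈ P
    · simp [hi, h4.1 i]
    · simp [hi]

lemma card_goods_zero [Fintype α] {E : Finset α} (hE : E.Nonempty) :
    #(goods 0 E) = ∑ P ∈ E.powerset.erase ∅, (#P - 1) * #(goods 0 (E \ P)) := by
  rw [card_goods (Or.inl rfl) hE]
  refine sum_congr rfl fun P hP => ?_
  congr 1
  have hP' := mem_erase.1 hP
  have hc := card_sdiff_add_card_eq_card (mem_powerset.1 hP'.2)
  have : {v ∈ Ioc #(E \ P) #E | v < #E ∨ v = 0} = Ioo #(E \ P) #E := by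
    ext v; simp only [mem_filter, mem_Ioc, mem_Ioo]; omega
  rw [this, Nat.card_Ioo]; omega

lemma card_goods_card [Fintype α] {E : Finset α} (hE : E.Nonempty) :
    #(goods #E E) = ∑ P ∈ E.powerset, #P * #(goods 0 (E \ P)) := by
  rw [card_goods (Or.inr rfl) hE, ← sum_erase E.powerset (a := ∅) (by simp)]
  refine sum_congr rfl fun P hP => ?_
  congr 1
  have hP' := mem_erase.1 hP
  have hc := card_sdiff_add_card_eq_card (mem_powerset.1 hP'.2)
  have : {v ∈ Ioc #(E \ P) #E | v < #E ∨ v = #E} = Ioc #(E \ P) #E := by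
    ext v; simp only [mem_filter, mem_Ioc]; omega
  rw [this, Nat.card_Ioc]; omega

/-- Writing `#P` as a sum over the elements of `P` and removing the marked element from `P`. -/
lemma sum_card_mul (E : Finset α) (d : Finset α → ℕ) :
    ∑ P ∈ E.powerset, #P * d (E \ P) =
      ∑ x ∈ E, ∑ P ∈ (E.erase x).powerset, d (E.erase x \ P) := by
  have h1 : ∀ P ∈ E.powerset, #P * d (E \ P) = ∑ x ∈ E, if x ∈ P then d (E \ P) else 0 := by
    intro P hP
    rw [← sum_filter, sum_const, smul_eq_mul, filter_mem_eq_inter,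
      inter_eq_right.2 (mem_powerset.1 hP)]
  rw [sum_congr rfl h1, sum_comm]
  refine sum_congr rfl fun x hx => ?_
  conv_lhs => rw [← insert_erase hx]
  rw [sum_powerset_insert (notMem_erase x E)]
  rw [sum_eq_zero, zero_add]
  · refine sum_congr rfl fun P hP => ?_
    rw [if_pos (mem_insert_self _ _)]
    congr 1
    ext y; simp; tauto
  · intro P hP
    rw [if_neg fun h => notMem_erase x E (mem_powerset.1 hP h)]

/-- Isolating `P = ∅` on the left and expanding it by `card_goods_zero` raises the coefficient of every
other term from `1` to `#P`. -/
lemma sum_goods_eq [Fintype α] {E : Finset α} (hE : E.Nonempty) :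
    ∑ P ∈ E.powerset, #(goods 0 (E \ P)) = ∑ P ∈ E.powerset, #P * #(goods 0 (E \ P)) := by
  have he : ∅ ∈ E.powerset := by simp
  rw [← add_sum_erase _ _ he, ← add_sum_erase _ (fun P => #P * _) he, sdiff_empty,
    card_goods_zero hE, ← sum_add_distrib]
  simp only [card_empty, zero_mul, zero_add]
  refine sum_congr rfl fun P hP => ?_
  have : 0 < #P := card_pos.2 (nonempty_iff_ne_empty.2 (mem_erase.1 hP).1)
  obtain ⟨k, hk⟩ := Nat.exists_eq_add_of_lt this
  rw [hk]; simp; ring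

/-- By `sum_goods_eq` and `sum_card_mul` the sums `A E` on the left satisfy
`A E = ∑ x ∈ E, A (E.erase x)`. -/
lemma sum_goods [Fintype α] (E : Finset α) :
    ∑ P ∈ E.powerset, #(goods 0 (E \ P)) = (#E).factorial := by
  induction hk : #E generalizing E with
  | zero =>
    obtain rfl := card_eq_zero.1 hk
    have : goods 0 (∅ : Finset α) = {0} := by
      ext φ
      simp only [mem_goods, Good, mem_singleton, funext_iff]
      simp
    simp [this]
  | succ k ih =>
    have hE : E.Nonempty := card_pos.1 (by omega)
    rw [sum_goods_eq hE, sum_card_mul E fun F => #(goods 0 F)]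
    rw [sum_congr rfl fun x hx => ih (E.erase x) (by rw [card_erase_of_mem hx, hk]; rfl)]
    simp [hk, Nat.factorial_succ]

lemma card_goods_eq_factorial [Fintype α] {E : Finset α} (hE : E.Nonempty) :
    #(goods #E E) = (#E).factorial := by
  rw [card_goods_card hE, ← sum_goods_eq hE, sum_goods]

end Counting

/-! ### Schubert matroids and good functions -/

section Schubert

variable {n : ℕ}

/-- The basis family of the Schubert matroid given by `(w, S)`. -/
def schubert (w : Equiv.Perm (Fin n)) (S : Finset (Fin n)) : Set (Finset (Fin n)) :=
  {T | #T = #S ∧ galeLE w S T}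

/-- The elements `i` whose position `w⁻¹ i` is below `φ i`. If `w` sorts `φ`, this consists, for each
level set of `φ`, of its first elements along `w`, as many as the level set contributes to the rank. -/
def lead (w : Equiv.Perm (Fin n)) (φ : Fin n → ℕ) : Finset (Fin n) :=
  {i | (w.symm i : ℕ) < φ i}

lemma mem_lead {w : Equiv.Perm (Fin n)} {φ : Fin n → ℕ} {i : Fin n} :
    i ∈ lead w φ ↔ (w.symm i : ℕ) < φ i := by simp [lead]

/-- If `w` sorts `φ`, the sublevel sets of `φ` are initial segments of `w`. -/
lemma pos_lt_le {w : Equiv.Perm (Fin n)} {φ : Fin n → ℕ} (hw : Monotone (φ ∘ w)) (p : Fin n)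
    (v : ℕ) : (p : ℕ) < #{j | φ j ≤ v} ↔ φ (w p) ≤ v := by
  have h := Tuple.lt_card_le_iff_apply_le_of_monotone (j := p) (a := v) hw
  have e : #{j | φ j ≤ v} = #{p | (φ ∘ w) p ≤ v} :=
    (card_equiv w (by simp)).symm
  rw [e]; exact h

lemma pos_lt_lt {w : Equiv.Perm (Fin n)} {φ : Fin n → ℕ} (hw : Monotone (φ ∘ w)) (p : Fin n)
    (v : ℕ) : (p : ℕ) < #{j | φ j < v} ↔ φ (w p) < v := by
  have h := Tuple.lt_card_lt_iff_apply_lt_of_monotone (j := p) (a := v) hw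
  have e : #{j | φ j < v} = #{p | (φ ∘ w) p < v} :=
    (card_equiv w (by simp)).symm
  rw [e]; exact h

lemma mono_symm {w : Equiv.Perm (Fin n)} {φ : Fin n → ℕ} (hw : Monotone (φ ∘ w)) {i j : Fin n}
    (h : w.symm i ≤ w.symm j) : φ i ≤ φ j := by
  simpa using hw h

/-- Of the Gale inequalities, only those at the sublevel sets of `φ` matter: on a level set the first
elements along `w` all belong to `lead w φ` and the remaining ones do not. -/
lemma mem_schubert {w : Equiv.Perm (Fin n)} {φ : Fin n → ℕ} (hw : Monotone (φ ∘ w))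
    {T : Finset (Fin n)} :
    T ∈ schubert w (lead w φ) ↔ #T = #(lead w φ) ∧
      ∀ v, #{t ∈ T | φ t ≤ v} ≤ #{s ∈ lead w φ | φ s ≤ v} := by
  refine and_congr_right fun _ => ⟨fun h v => ?_, fun h j => ?_⟩
  · rcases Nat.eq_zero_or_pos #{j | φ j ≤ v} with h0 | h0
    · have : ∀ t, ¬ φ t ≤ v := by simpa [filter_eq_empty_iff] using h0
      simp [this]
    · have hc : #{j | φ j ≤ v} ≤ n := (card_filter_le _ _).trans (by simp)
      have key := h (w ⟨#{j | φ j ≤ v} - 1, by omega⟩)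
      have : ∀ t, w.symm t ≤ w.symm (w ⟨#{j | φ j ≤ v} - 1, by omega⟩) ↔ φ t ≤ v := by
        intro t
        have := pos_lt_le hw (w.symm t) v
        rw [w.apply_symm_apply] at this
        rw [← this, w.symm_apply_apply, Fin.le_def]
        dsimp only
        omega
      simpa only [this] using key
  · rcases le_or_gt (φ j) (w.symm j) with hj | hj
    · calc #{t ∈ T | w.symm t ≤ w.symm j} ≤ #{t ∈ T | φ t ≤ φ j} :=
            card_le_card (monotone_filter_right _ fun t _ ht => mono_symm hw ht)
        _ ≤ #{s ∈ lead w φ | φ s ≤ φ j} := h _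
        _ ≤ _ := by
            refine card_le_card fun s hs => ?_
            simp only [mem_filter, mem_lead] at hs ⊢
            refine ⟨hs.1, ?_⟩
            rw [Fin.le_def]; omega
    · have hT : #{t ∈ T | φ t < φ j} ≤ #{s ∈ lead w φ | φ s < φ j} := by
        simpa only [Nat.le_sub_one_iff_lt (by omega : 0 < φ j)] using h (φ j - 1)
      calc #{t ∈ T | w.symm t ≤ w.symm j}
          ≤ #({t ∈ T | φ t < φ j} ∪ ({t | w.symm t ≤ w.symm j ∧ ¬ φ t < φ j} : Finset _)) := by
            refine card_le_card fun t ht => ?_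
            simp only [mem_filter, mem_union, mem_univ, true_and] at ht ⊢
            tauto
        _ ≤ _ := card_union_le _ _
        _ ≤ #{s ∈ lead w φ | φ s < φ j} + #{t | w.symm t ≤ w.symm j ∧ ¬ φ t < φ j} := by gcongr
        _ = #({s ∈ lead w φ | φ s < φ j} ∪
              ({t | w.symm t ≤ w.symm j ∧ ¬ φ t < φ j} : Finset _)) := by
            refine (card_union_of_disjoint ?_).symm
            rw [disjoint_left]
            simp only [mem_filter]
            tauto
        _ ≤ _ := by
            refine card_le_card fun t ht => ?_
            simp only [mem_filter, mem_union, mem_univ, true_and, mem_lead] at ht ⊢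
            rcases ht with ⟨h1, h2⟩ | ⟨h1, h2⟩
            · refine ⟨h1, ?_⟩
              by_contra hc
              exact absurd (mono_symm hw (not_le.1 hc).le) (by omega)
            · have := Fin.le_def.1 h1
              exact ⟨by omega, h1⟩

/-- A basis element may be replaced by an element of the same or a higher level. -/
lemma exchange {w : Equiv.Perm (Fin n)} {φ : Fin n → ℕ} (hw : Monotone (φ ∘ w))
    {T : Finset (Fin n)} (hT : T ∈ schubert w (lead w φ)) {i j : Fin n} (hij : φ i ≤ φ j)
    (hi : i ∈ T) (hj : j ∉ T) : insert j (T.erase i) ∈ schubert w (lead w φ) := by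
  rw [mem_schubert hw] at hT ⊢
  have hpos := card_pos.2 ⟨i, hi⟩
  refine ⟨?_, fun v => le_trans ?_ (hT.2 v)⟩
  · rw [card_insert_of_notMem (by simp [hj]), card_erase_of_mem hi, ← hT.1]; omega
  · rw [filter_insert]
    split_ifs with hv
    · refine (card_insert_le _ _).trans ?_
      have hi' : i ∈ {t ∈ T | φ t ≤ v} := mem_filter.2 ⟨hi, hij.trans hv⟩
      have := card_pos.2 ⟨i, hi'⟩
      rw [filter_erase, card_erase_of_mem hi']; omega
    · exact card_le_card (filter_subset_filter _ (erase_subset _ _))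

lemma self_mem_schubert (w : Equiv.Perm (Fin n)) (S : Finset (Fin n)) : S ∈ schubert w S :=
  ⟨rfl, fun _ => le_rfl⟩

lemma good_le {φ : Fin n → ℕ} (h : Good n univ φ) (i : Fin n) : φ i ≤ n := by
  simpa using h.le_max i

lemma good_lt {φ : Fin n → ℕ} (h : Good n univ φ) (i : Fin n) : #{j | φ j < φ i} < φ i :=
  (h.2 i (mem_univ i)).1

/-- Position `φ i` lies in the level set of `i`, unless `φ i = n`. -/
lemma apply_pos {w : Equiv.Perm (Fin n)} {φ : Fin n → ℕ} (h : Good n univ φ)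
    (hw : Monotone (φ ∘ w)) {i : Fin n} (hi : φ i < n) : φ (w ⟨φ i, hi⟩) = φ i := by
  have h1 := (h.2 i (mem_univ i)).2.resolve_right hi.ne
  have h2 := good_lt h i
  refine le_antisymm ((pos_lt_le hw ⟨φ i, hi⟩ (φ i)).1 h1) (not_lt.1 fun h3 => ?_)
  exact absurd ((pos_lt_lt hw ⟨φ i, hi⟩ (φ i)).2 h3) (by dsimp only; omega)

/-- The preorder `φ i ≤ φ j` can be read off from the basis family. -/
lemma le_iff_exchange {w : Equiv.Perm (Fin n)} {φ : Fin n → ℕ} (h : Good n univ φ)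
    (hw : Monotone (φ ∘ w)) (i j : Fin n) :
    φ i ≤ φ j ↔ ∀ T ∈ schubert w (lead w φ), i ∈ T → j ∉ T →
      insert j (T.erase i) ∈ schubert w (lead w φ) := by
  refine ⟨fun hij T hT => exchange hw hT hij, fun hR => ?_⟩
  by_contra! hlt
  have hin := good_le h i
  have hil := good_lt h i
  have hjn : φ j < n := by omega
  obtain ⟨e, he⟩ : ∃ e, e = w ⟨φ j, hjn⟩ := ⟨_, rfl⟩
  obtain ⟨f, hf⟩ : ∃ f, f = w ⟨#{k | φ k < φ i}, by omega⟩ := ⟨_, rfl⟩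
  have hφe : φ e = φ j := he ▸ apply_pos h hw hjn
  have hφf : φ f = φ i := by
    rw [hf]
    refine le_antisymm ((pos_lt_le hw _ _).1 ?_) (not_lt.1 fun h3 => ?_)
    · change #{k | φ k < φ i} < #{k | φ k ≤ φ i}
      refine card_lt_card ((ssubset_iff_of_subset ?_).2 ⟨i, ?_, ?_⟩)
      · exact monotone_filter_right _ fun _ _ h => le_of_lt h
      · simp
      · simp
    · exact absurd ((pos_lt_lt hw _ _).2 h3) (lt_irrefl _)
  have hfl : f ∈ lead w φ := by
    rw [mem_lead, hφf, hf, w.symm_apply_apply]; exact hil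
  have hel : e ∉ lead w φ := by
    rw [mem_lead, hφe, he, w.symm_apply_apply]; simp
  -- Exchanges along `f → i → j → e` compose, which would turn `lead w φ` into a basis with too many
  -- elements of level at most `φ j`; `e` is the first non-leading element in the block of `j`, and
  -- `f` the first element in the block of `i`.
  have hfj : ∀ T ∈ schubert w (lead w φ), f ∈ T → j ∉ T →
      insert j (T.erase f) ∈ schubert w (lead w φ) := by
    intro T hT hfT hjT
    by_cases hiT : i ∈ T
    · by_cases hfi : f = i
      · rw [hfi]; exact hR T hT hiT hjT
      have h1 := hR T hT hiT hjT
      have h2 := exchange hw h1 (i := f) (j := i) hφf.le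
        (by simp [hfT, hfi]) (by simp; rintro rfl; exact absurd hiT hjT)
      convert h2 using 1
      ext x; simp only [mem_insert, mem_erase]; grind
    · have h1 := exchange hw hT hφf.le hfT hiT
      have h2 := hR _ h1 (by simp) (by
        simp only [mem_insert, mem_erase, not_or]
        exact ⟨by rintro rfl; omega, fun h => hjT h.2⟩)
      convert h2 using 1
      ext x; simp only [mem_insert, mem_erase]; grind
  have hmem : insert e ((lead w φ).erase f) ∈ schubert w (lead w φ) := by
    by_cases hjT : j ∈ lead w φ
    · have h1 := exchange hw (self_mem_schubert w _) hφe.ge hjT hel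
      have h2 := hfj _ h1 (by
        simp only [mem_insert, mem_erase]; right; exact ⟨by rintro rfl; omega, hfl⟩)
        (by simp; rintro rfl; exact hel hjT)
      convert h2 using 1
      ext x; simp only [mem_insert, mem_erase]; grind
    · have h1 := hfj _ (self_mem_schubert w _) hfl hjT
      by_cases hej : e = j
      · rw [hej]; exact h1
      have h2 := exchange hw h1 hφe.ge (by simp) (by simp [hel, hej])
      convert h2 using 1
      ext x; simp only [mem_insert, mem_erase]; grind
  have hcount := ((mem_schubert hw).1 hmem).2 (φ j)
  rw [filter_insert, if_pos hφe.le, filter_erase, erase_eq_of_notMem, card_insert_of_notMem]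
    at hcount
  · omega
  · simp [hel]
  · simp [hφf, hlt]

/-- For fixed `w`, the family determines `S`, which is its Gale-least member. -/
lemma eq_of_schubert_eq {w : Equiv.Perm (Fin n)} {S S' : Finset (Fin n)}
    (h : schubert w S = schubert w S') : S = S' := by
  have h1 := (h ▸ self_mem_schubert w S : S ∈ schubert w S').2
  have h2 := (h ▸ self_mem_schubert w S' : S' ∈ schubert w S).2
  have heq : ∀ j, #{s ∈ S | w.symm s ≤ w.symm j} = #{s ∈ S' | w.symm s ≤ w.symm j} :=
    fun j => le_antisymm (h1 j) (h2 j)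
  have hlt : ∀ j, #{s ∈ S | w.symm s < w.symm j} = #{s ∈ S' | w.symm s < w.symm j} := by
    intro j
    rcases Nat.eq_zero_or_pos (w.symm j) with h0 | h0
    · have : ∀ s, ¬ w.symm s < w.symm j := by intro s; rw [Fin.lt_def]; omega
      simp [this]
    · have := heq (w ⟨w.symm j - 1, by omega⟩)
      have e : ∀ t, w.symm t ≤ w.symm (w ⟨w.symm j - 1, by omega⟩) ↔ w.symm t < w.symm j := by
        intro t
        rw [w.symm_apply_apply, Fin.le_def, Fin.lt_def]; dsimp only; omega
      simpa only [e] using this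
  have split : ∀ (S : Finset (Fin n)) j, #{s ∈ S | w.symm s ≤ w.symm j} =
      #{s ∈ S | w.symm s < w.symm j} + if j ∈ S then 1 else 0 := by
    intro S j
    split_ifs with hj
    · rw [← card_insert_of_notMem (a := j) (by simp)]
      congr 1
      ext x; simp only [mem_filter, mem_insert, le_iff_lt_or_eq, w.symm.injective.eq_iff]; grind
    · congr 1
      ext x; simp only [mem_filter, le_iff_lt_or_eq, w.symm.injective.eq_iff]; grind
  ext j
  have a := heq j
  rw [split S, split S', hlt j] at a
  by_cases h1 : j ∈ S <;> by_cases h2 : j ∈ S' <;> simp_all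

lemma card_lead_filter (w : Equiv.Perm (Fin n)) (φ : Fin n → ℕ) (v : ℕ) :
    #{s ∈ lead w φ | φ s ≤ v} = #{p : Fin n | (p : ℕ) < (φ ∘ w) p ∧ (φ ∘ w) p ≤ v} :=
  (card_equiv w (by simp [mem_lead])).symm

lemma card_lead (w : Equiv.Perm (Fin n)) (φ : Fin n → ℕ) :
    #(lead w φ) = #{p : Fin n | (p : ℕ) < (φ ∘ w) p} :=
  (card_equiv w (by simp [mem_lead])).symm

/-- The family attached to `φ` does not depend on the order chosen inside the level sets. -/
lemma schubert_congr {w w' : Equiv.Perm (Fin n)} {φ : Fin n → ℕ} (hw : Monotone (φ ∘ w))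
    (hw' : Monotone (φ ∘ w')) : schubert w (lead w φ) = schubert w' (lead w' φ) := by
  have e : φ ∘ w = φ ∘ w' := Tuple.unique_monotone hw hw'
  ext T
  simp only [mem_schubert hw, mem_schubert hw', card_lead_filter, card_lead, e]

/-- The Schubert matroid encoded by `φ`, with ties inside level sets broken by `Tuple.sort`. -/
noncomputable def fam (φ : Fin n → ℕ) : Set (Finset (Fin n)) :=
  schubert (Tuple.sort φ) (lead (Tuple.sort φ) φ)

lemma fam_eq {w : Equiv.Perm (Fin n)} {φ : Fin n → ℕ} (hw : Monotone (φ ∘ w)) :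
    fam φ = schubert w (lead w φ) := schubert_congr (Tuple.monotone_sort φ) hw

/-- A good function is determined by its preorder and its leading elements: if `φ i < ψ i`, the
element in position `φ i` would lead for `ψ` but not for `φ`. -/
lemma le_of_lead_eq {w : Equiv.Perm (Fin n)} {φ ψ : Fin n → ℕ} (h : Good n univ φ)
    (h' : Good n univ ψ) (hw : Monotone (φ ∘ w)) (hle : ∀ i j, φ i ≤ φ j ↔ ψ i ≤ ψ j)
    (hl : lead w φ = lead w ψ) (i : Fin n) : ψ i ≤ φ i := by
  by_contra! hlt
  have hn : φ i < n := hlt.trans_le (good_le h' i)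
  have h1 := apply_pos h hw hn
  have h2 : ψ (w ⟨φ i, hn⟩) = ψ i :=
    le_antisymm ((hle _ _).1 h1.le) ((hle _ _).1 h1.ge)
  have h3 : w ⟨φ i, hn⟩ ∈ lead w ψ := by rw [mem_lead, h2, w.symm_apply_apply]; exact hlt
  rw [← hl, mem_lead, h1, w.symm_apply_apply] at h3
  exact lt_irrefl _ h3

/-- Distinct good functions give distinct basis families. -/
lemma fam_injOn : Set.InjOn (fam (n := n)) {φ | Good n univ φ} := by
  intro φ h ψ h' heq
  have hle : ∀ i j, φ i ≤ φ j ↔ ψ i ≤ ψ j := fun i j => by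
    rw [le_iff_exchange h (Tuple.monotone_sort φ), le_iff_exchange h' (Tuple.monotone_sort ψ)]
    change (∀ T ∈ fam φ, _ → _ → _ ∈ fam φ) ↔ (∀ T ∈ fam ψ, _ → _ → _ ∈ fam ψ)
    rw [heq]
  have hw := Tuple.monotone_sort φ
  have hw' : Monotone (ψ ∘ Tuple.sort φ) := fun p q hpq => (hle _ _).1 (hw hpq)
  rw [fam_eq hw, fam_eq hw'] at heq
  have hl := eq_of_schubert_eq heq
  funext i
  exact le_antisymm (le_of_lead_eq h' h hw' (fun i j => (hle i j).symm) hl.symm i)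
    (le_of_lead_eq h h' hw hle hl i)

lemma fam_loopless {φ : Fin n → ℕ} (h : Good n univ φ) : FamLoopless (fam φ) := by
  intro i
  have hw := Tuple.monotone_sort φ
  by_cases hi : i ∈ lead (Tuple.sort φ) φ
  · exact ⟨_, self_mem_schubert _ _, hi⟩
  -- The first element always leads, and it can be exchanged for any other.
  set f := Tuple.sort φ ⟨0, i.pos⟩ with hf
  have hfl : f ∈ lead (Tuple.sort φ) φ := by
    rw [mem_lead, hf, Equiv.symm_apply_apply]
    exact (Nat.zero_le _).trans_lt (good_lt h _)
  have hfi : φ f ≤ φ i := mono_symm hw (by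
    rw [hf, Equiv.symm_apply_apply, Fin.le_def]; exact Nat.zero_le _)
  exact ⟨_, exchange hw (self_mem_schubert _ _) hfi hfl hi, mem_insert_self _ _⟩

/-- For a 0/1 word `s` that starts with 1 and is 0 from `n` on, `g p` is the position where the
maximal factor `1…10…0` around `p` switches from 1 to 0. -/
lemma exists_run_map {n : ℕ} (s : ℕ → Prop) (h0 : s 0) (hn : ∀ q, n ≤ q → ¬ s q) :
    ∃ g : ℕ → ℕ, Monotone g ∧ (∀ p, p < g p ↔ s p) ∧
      ∀ p, 0 < g p ∧ g p ≤ n ∧ g (g p - 1) = g p ∧ g (g p) = g p := by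
  classical
  have hex : ∀ p, ∃ q, p ≤ q ∧ ¬ s q := fun p => ⟨max p n, le_max_left _ _, hn _ (le_max_right _ _)⟩
  have F1 : ∀ p, p ≤ Nat.find (hex p) := fun p => (Nat.find_spec (hex p)).1
  have F2 : ∀ p, ¬ s (Nat.find (hex p)) := fun p => (Nat.find_spec (hex p)).2
  have F3 : ∀ p q, p ≤ q → ¬ s q → Nat.find (hex p) ≤ q := fun p q h1 h2 =>
    Nat.find_min' (hex p) ⟨h1, h2⟩
  have G1 : ∀ p, Nat.findGreatest s p ≤ p := fun p => Nat.findGreatest_le p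
  have G2 : ∀ p, s (Nat.findGreatest s p) := fun p => Nat.findGreatest_spec (Nat.zero_le p) h0
  have G3 : ∀ p q, q ≤ p → s q → q ≤ Nat.findGreatest s p := fun p q h1 h2 =>
    Nat.le_findGreatest h1 h2
  -- From here on only these properties of the two search functions are used.
  generalize hF : (fun p => Nat.find (hex p)) = F at *
  have hF' : ∀ p, Nat.find (hex p) = F p := fun p => congrFun hF p
  simp only [hF'] at F1 F2 F3
  generalize Nat.findGreatest s = G at *
  clear hF' hF
  have F4 : ∀ p, s p → p < F p := fun p hp =>
    lt_of_le_of_ne (F1 p) fun h => F2 p (h ▸ hp)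
  have F5 : ∀ p, s p → s (F p - 1) := fun p hp => by
    by_contra hc
    have := F4 p hp
    have := F3 p _ (by omega) hc
    omega
  have G4 : ∀ p, ¬ s p → G p < p := fun p hp =>
    lt_of_le_of_ne (G1 p) fun h => hp (h ▸ G2 p)
  have G5 : ∀ p, ¬ s p → ¬ s (G p + 1) := fun p hp hc => by
    have := G3 p _ (G4 p hp) hc
    omega
  have sn : ∀ p, s p → p < n := fun p hp => not_le.1 fun h => hn p h hp
  refine ⟨fun p => if s p then F p else G p + 1, ?_, ?_, ?_⟩
  · intro p q hpq
    dsimp only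
    split_ifs with hp hq hq
    · exact F3 p _ (hpq.trans (F1 q)) (F2 q)
    · have := F3 p q hpq hq
      have := G3 q _ (by omega) (F5 p hp)
      omega
    · have := G4 p hp
      have := F4 q hq
      omega
    · have := G3 q _ ((G1 p).trans hpq) (G2 p)
      omega
  · intro p
    dsimp only
    split_ifs with hp
    · simp [hp, F4 p hp]
    · have := G4 p hp
      simp only [hp, iff_false]; omega
  · intro p
    dsimp only
    by_cases hp : s p
    · have a1 := F4 p hp
      have a2 := F5 p hp
      have a3 := F2 p
      have a4 := sn _ a2
      have a5 := F3 (F p - 1) (F p) (by omega) a3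
      have a6 := F4 _ a2
      have a7 := G3 (F p) _ (by omega) a2
      have a8 := G4 _ a3
      simp only [hp, if_true, a2, a3, if_false]
      omega
    · have a1 := G4 p hp
      have a2 := G2 p
      have a3 := G5 p hp
      have a4 := sn _ a2
      have a5 := F3 (G p) (G p + 1) (by omega) a3
      have a6 := F4 _ a2
      have a7 := G3 (G p + 1) _ (by omega) a2
      have a8 := G4 _ a3
      simp only [hp, if_false, Nat.add_sub_cancel, a2, a3, if_true]
      omega

/-- Every loopless Schubert matroid comes from a good function. -/
lemma exists_good {w : Equiv.Perm (Fin n)} {S : Finset (Fin n)} (hn : 1 ≤ n)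
    (h : FamLoopless (schubert w S)) : ∃ φ, Good n univ φ ∧ fam φ = schubert w S := by
  -- The first element along `w` is a loop unless it belongs to `S`.
  have h0 : w ⟨0, hn⟩ ∈ S := by
    obtain ⟨B, hB, hiB⟩ := h (w ⟨0, hn⟩)
    have h1 := hB.2 (w ⟨0, hn⟩)
    have h2 := (card_pos.2 ⟨w ⟨0, hn⟩, by simpa using hiB⟩).trans_le h1
    obtain ⟨x, hx⟩ := card_pos.1 h2
    rw [mem_filter, w.symm_apply_apply, Fin.le_def] at hx
    have : w.symm x = ⟨0, hn⟩ := Fin.ext (Nat.le_zero.1 hx.2)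
    rw [← this, w.apply_symm_apply]; exact hx.1
  obtain ⟨g, hg, hs, hg'⟩ := exists_run_map (n := n) (fun q => ∃ hq : q < n, w ⟨q, hq⟩ ∈ S)
    ⟨hn, h0⟩ (fun q hq ⟨h1, _⟩ => by omega)
  have hw : Monotone ((fun i => g (w.symm i)) ∘ w) := fun p q hpq => by
    simpa using hg (Fin.le_def.1 hpq)
  have hlead : lead w (fun i => g (w.symm i)) = S := by
    ext i
    rw [mem_lead, hs]
    simp
  refine ⟨fun i => g (w.symm i), ⟨by simp, fun i _ => ?_⟩, by rw [fam_eq hw, hlead]⟩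
  obtain ⟨k1, k2, k3, k4⟩ := hg' (w.symm i)
  beta_reduce
  generalize g (w.symm i) = v at *
  constructor
  · by_contra! hc
    have := (pos_lt_lt hw ⟨v - 1, by omega⟩ v).1 (by dsimp only; omega)
    simp [k3] at this
  · rcases k2.lt_or_eq with hlt | heq
    · left
      exact (pos_lt_le hw ⟨v, hlt⟩ v).2 (by simp [k4])
    · exact Or.inr heq

end Schubert

/-- The number of basis families of loopless Schubert matroids on `[n]` is `n!`. -/
theorem card_loopless_schubert_eq_factorial (n : ℕ) (hn : 1 ≤ n) :
    {ℬ : Set (Finset (Fin n)) | IsSchubertFamily ℬ ∧ FamLoopless ℬ}.ncard =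
      Nat.factorial n := by
  have himg : {ℬ : Set (Finset (Fin n)) | IsSchubertFamily ℬ ∧ FamLoopless ℬ} =
      fam '' {φ | Good n univ φ} := by
    ext ℬ
    constructor
    · rintro ⟨⟨w, S, rfl⟩, hl⟩
      exact exists_good hn hl
    · rintro ⟨φ, hφ, rfl⟩
      exact ⟨⟨_, _, rfl⟩, fam_loopless hφ⟩
  have hgoods : {φ : Fin n → ℕ | Good n univ φ} = ↑(goods n (univ : Finset (Fin n))) := by
    ext φ; simp [mem_goods]
  have hcard := card_goods_eq_factorial (E := (univ : Finset (Fin n))) ⟨⟨0, hn⟩, mem_univ _⟩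
  rw [card_univ, Fintype.card_fin] at hcard
  rw [himg, fam_injOn.ncard_image, hgoods, Set.ncard_coe_finset, hcard]
end

section
/- For every n ≥ 1, the number of distinct families ℬ of subsets of [n] that are basis families of Schubert matroids on [n] which are both loopless and coloopless equals the number of derangements of an n-element set (permutations of [n] with no fixed points). -/
/-!
Read `[n]` in the order `w` and record which elements lie in `S`. If the first element lies in
`S` and the last one does not, the resulting word splits uniquely into blocks, each a nonempty
run of letters in `S`
followed by a nonempty run of letters outside `S`. The Schubert matroid of `(w, S)` only depends
on the resulting ordered set partition `B₁, …, Bₘ` of `[n]` and on the numbers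
`aᵢ = #(S ∩ Bᵢ)`, `0 < aᵢ < #Bᵢ`: a set `I` is independent iff
`#(I ∩ (B₁ ∪ ⋯ ∪ Bᵢ)) ≤ a₁ + ⋯ + aᵢ` for all `i`. The first element lies in `S` iff there are no
loops and the last one lies outside `S` iff there are no coloops, so loopless and coloopless
Schubert matroids are exactly the matroids of such block data (`exists_good`,
`isSchubertFamily_bases`).

The block data can be recovered from the matroid (`eq_of_ind_iff`), one block at a time from the
end: the last block consists of the elements that can be added to every independent set that is
not a basis (`mem_last_iff`), and deleting it leaves the matroid of the other blocks.

Splitting off the last block shows that the number `d n` of block data on `n` points satisfies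
`d n = ∑ₖ (n choose k) (k - 1) d (n - k)` for `n ≥ 1`. The derangement numbers satisfy the same
recursion (`sum_choose_mul_pred`), which follows from `∑ₖ (n choose k) D k = n!`.
-/

open Finset

/-- A family of subsets of `[n]` is coloopless if every `i ∈ [n]` is omitted by some
member. -/
def FamColoopless {n : ℕ} (ℬ : Set (Finset (Fin n))) : Prop :=
  ∀ i : Fin n, ∃ B ∈ ℬ, i ∉ B

namespace SchubertCount

/-! ### Matroids of block data -/

variable {α : Type*} [DecidableEq α]

/-- A list of blocks `(B, a)`, read from the last block of the ground set to the first one, which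
partitions `E` into blocks with `0 < a < #B`. -/
def Good : Finset α → List (Finset α × ℕ) → Prop
  | E, [] => E = ∅
  | E, p :: L => p.1 ⊆ E ∧ 0 < p.2 ∧ p.2 < #p.1 ∧ Good (E \ p.1) L

/-- The rank of the matroid attached to a list of blocks. -/
def rk : List (Finset α × ℕ) → ℕ
  | [] => 0
  | p :: L => p.2 + rk L

/-- Independence in the matroid attached to a list of blocks: the union of each initial sequence
of blocks `(B, a)` contains at most as many elements of `I` as the sum of the `a`. Since the head
of the list is the last block, the recursion removes that block and bounds the total `#I`; the
base case forces `I` into the ground set. -/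
def Ind : List (Finset α × ℕ) → Finset α → Prop
  | [], I => I = ∅
  | p :: L, I => Ind L (I \ p.1) ∧ #I ≤ p.2 + rk L

theorem Ind.card_le {L : List (Finset α × ℕ)} {I : Finset α} (h : Ind L I) : #I ≤ rk L := by
  cases L with
  | nil => simp only [Ind] at h; simp [h]
  | cons p L => exact h.2

theorem Ind.subset {L : List (Finset α × ℕ)} {E I : Finset α} (hL : Good E L) (h : Ind L I) :
    I ⊆ E := by
  induction L generalizing E I with
  | nil => simp only [Ind] at h; simp [h]
  | cons p L ih =>
    intro x hx
    by_cases hp : x ∈ p.1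
    · exact hL.1 hp
    · exact (mem_sdiff.1 (ih hL.2.2.2 h.1 (mem_sdiff.2 ⟨hx, hp⟩))).1

theorem Ind.mono {L : List (Finset α × ℕ)} {I J : Finset α} (h : Ind L J) (hIJ : I ⊆ J) :
    Ind L I := by
  induction L generalizing I J with
  | nil => simp only [Ind] at h ⊢; subst h; exact subset_empty.1 hIJ
  | cons p L ih => exact ⟨ih h.1 (sdiff_subset_sdiff hIJ le_rfl), (card_le_card hIJ).trans h.2⟩

theorem ind_empty (L : List (Finset α × ℕ)) : Ind L ∅ := by
  induction L with
  | nil => rfl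
  | cons p L ih => exact ⟨by simpa using ih, by simp⟩

/-- Every independent set is contained in a basis. -/
theorem Ind.exists_basis {L : List (Finset α × ℕ)} {E I : Finset α} (hL : Good E L)
    (h : Ind L I) : ∃ T, I ⊆ T ∧ Ind L T ∧ #T = rk L := by
  induction L generalizing E I with
  | nil => exact ⟨I, subset_rfl, h, by simp only [Ind] at h; simp [h, rk]⟩
  | cons p L ih =>
    obtain ⟨T', hIT, hT', hc⟩ := ih hL.2.2.2 h.1
    have hd : Disjoint T' p.1 :=
      disjoint_of_subset_left (Ind.subset hL.2.2.2 hT') sdiff_disjoint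
    have hI : I ⊆ T' ∪ p.1 := by
      intro x hx
      by_cases hp : x ∈ p.1
      · exact mem_union_right _ hp
      · exact mem_union_left _ (hIT (mem_sdiff.2 ⟨hx, hp⟩))
    obtain ⟨T, h1, h2, h3⟩ := exists_subsuperset_card_eq hI h.2 (by
      rw [card_union_of_disjoint hd]; have := hL.2.2.1; omega)
    refine ⟨T, h1, ⟨hT'.mono ?_, h3.le⟩, h3⟩
    intro x hx
    rw [mem_sdiff] at hx
    exact (mem_union.1 (h2 hx.1)).resolve_right hx.2

/-- No element of the ground set is a coloop, because each block `(B, a)` has `a < #B`. -/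
theorem exists_basis_notMem {L : List (Finset α × ℕ)} {E : Finset α} (hL : Good E L) {x : α}
    (hx : x ∈ E) : ∃ T, x ∉ T ∧ Ind L T ∧ #T = rk L := by
  induction L generalizing E with
  | nil => simp only [Good] at hL; simp [hL] at hx
  | cons p L ih =>
    have key : ∃ T', x ∉ T' ∧ Ind L T' ∧ #T' = rk L := by
      by_cases hp : x ∈ p.1
      · obtain ⟨T, -, hT, hc⟩ := (ind_empty L).exists_basis hL.2.2.2
        refine ⟨T, fun hxT => ?_, hT, hc⟩
        exact (mem_sdiff.1 (hT.subset hL.2.2.2 hxT)).2 hp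
      · exact ih hL.2.2.2 (mem_sdiff.2 ⟨hx, hp⟩)
    obtain ⟨T', hxT, hT', hc⟩ := key
    have hpc : p.2 ≤ #(p.1.erase x) := by
      have := hL.2.2.1
      have := pred_card_le_card_erase (s := p.1) (a := x)
      omega
    obtain ⟨U, hU, hUc⟩ := exists_subset_card_eq hpc
    have hUp : U ⊆ p.1 := hU.trans (erase_subset _ _)
    have hd : Disjoint T' p.1 :=
      disjoint_of_subset_left (Ind.subset hL.2.2.2 hT') sdiff_disjoint
    have hcard : #(T' ∪ U) = p.2 + rk L := by
      rw [card_union_of_disjoint (disjoint_of_subset_right hUp hd)]; omega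
    refine ⟨T' ∪ U, ?_, ⟨hT'.mono ?_, hcard.le⟩, hcard⟩
    · rw [mem_union]
      rintro (h | h)
      · exact hxT h
      · simpa using hU h
    · intro y hy
      rw [mem_sdiff, mem_union] at hy
      exact hy.1.resolve_right fun h => hy.2 (hUp h)

/-- No element of the ground set is a loop, because each block `(B, a)` has `0 < a`. -/
theorem ind_singleton {L : List (Finset α × ℕ)} {E : Finset α} (hL : Good E L) {x : α}
    (hx : x ∈ E) : Ind L {x} := by
  induction L generalizing E with
  | nil => simp only [Good] at hL; simp [hL] at hx
  | cons p L ih =>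
    refine ⟨?_, by have := hL.2.1; rw [card_singleton]; omega⟩
    by_cases hp : x ∈ p.1
    · rw [sdiff_eq_empty_iff_subset.2 (singleton_subset_iff.2 hp)]
      exact ind_empty L
    · exact (ih hL.2.2.2 (mem_sdiff.2 ⟨hx, hp⟩)).mono sdiff_subset

theorem rk_le_of_ind_imp {L L' : List (Finset α × ℕ)} {E : Finset α} (hL : Good E L)
    (h : ∀ I, Ind L I → Ind L' I) : rk L ≤ rk L' := by
  obtain ⟨T, -, hT, hc⟩ := (ind_empty L).exists_basis hL
  exact hc ▸ (h T hT).card_le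

/-- The last block is intrinsic: it consists of the elements which can be added freely to every
independent set that is not a basis. -/
theorem mem_last_iff {p : Finset α × ℕ} {L : List (Finset α × ℕ)} {E : Finset α}
    (hL : Good E (p :: L)) {x : α} (hx : x ∈ E) :
    x ∈ p.1 ↔ ∀ I, Ind (p :: L) I → #I < rk (p :: L) → Ind (p :: L) (insert x I) := by
  constructor
  · intro hp I hI hc
    refine ⟨?_, (card_insert_le _ _).trans hc⟩
    rw [insert_sdiff_of_mem _ hp]
    exact hI.1
  · intro h
    by_contra hp
    obtain ⟨T, hxT, hT, hc⟩ := exists_basis_notMem hL.2.2.2 (mem_sdiff.2 ⟨hx, hp⟩)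
    have h1 : Ind (p :: L) T := ⟨hT.mono sdiff_subset, by rw [hc]; omega⟩
    have h2 := h T h1 (by have := hL.2.1; rw [hc]; simp only [rk]; omega)
    have hd : Disjoint (insert x T) p.1 := by
      rw [disjoint_insert_left]
      exact ⟨hp, disjoint_of_subset_left (Ind.subset hL.2.2.2 hT) sdiff_disjoint⟩
    have h3 := h2.1.card_le
    rw [sdiff_eq_self_of_disjoint hd, card_insert_of_notMem hxT] at h3
    omega

theorem ind_tail_iff {p : Finset α × ℕ} {L : List (Finset α × ℕ)} {E I : Finset α}
    (hL : Good E (p :: L)) : Ind L I ↔ Disjoint I p.1 ∧ Ind (p :: L) I := by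
  constructor
  · intro h
    exact ⟨disjoint_of_subset_left (Ind.subset hL.2.2.2 h) sdiff_disjoint,
      h.mono sdiff_subset, h.card_le.trans (Nat.le_add_left _ _)⟩
  · rintro ⟨hd, h, -⟩
    rwa [sdiff_eq_self_of_disjoint hd] at h

/-- A list of blocks can be recovered from its independent sets. -/
theorem eq_of_ind_iff {L L' : List (Finset α × ℕ)} {E : Finset α} (hL : Good E L)
    (hL' : Good E L') (h : ∀ I, Ind L I ↔ Ind L' I) : L = L' := by
  induction L generalizing L' E with
  | nil =>
    cases L' with
    | nil => rfl
    | cons p' L' =>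
      have h1 := card_le_card hL'.1
      have h2 := hL'.2.2.1
      simp only [Good] at hL
      simp [hL] at h1
      simp [h1] at h2
  | cons p L ih =>
    cases L' with
    | nil =>
      have h1 := card_le_card hL.1
      have h2 := hL.2.2.1
      simp only [Good] at hL'
      simp [hL'] at h1
      simp [h1] at h2
    | cons p' L' =>
      have hr : rk (p :: L) = rk (p' :: L') :=
        le_antisymm (rk_le_of_ind_imp hL fun I => (h I).1)
          (rk_le_of_ind_imp hL' fun I => (h I).2)
      have hB : p.1 = p'.1 := by
        ext x
        by_cases hx : x ∈ E
        · rw [mem_last_iff hL hx, mem_last_iff hL' hx, hr]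
          simp only [h]
        · exact ⟨fun hp => absurd (hL.1 hp) hx, fun hp => absurd (hL'.1 hp) hx⟩
      have hT : L = L' := by
        refine ih (E := E \ p.1) hL.2.2.2 (hB ▸ hL'.2.2.2) fun I => ?_
        rw [ind_tail_iff hL, ind_tail_iff hL', h, hB]
      subst hT
      have ha : p.2 = p'.2 := by simpa [rk] using hr
      rw [Prod.ext hB ha]

/-! ### Counting lists of blocks -/

theorem sum_choose_mul_numDerangements (n : ℕ) :
    ∑ k ∈ range (n + 1), n.choose k * numDerangements k = n.factorial := by
  induction n with
  | zero => simp
  | succ n ih =>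
    zify at ih ⊢
    have hs : ∀ k, ((n + 1).choose (k + 1) : ℤ) * numDerangements (k + 1)
        = (n + 1) * (n.choose k * numDerangements k)
          + (-1) ^ (k + 1) * ((n + 1).choose (k + 1) : ℤ) := by
      intro k
      have := Nat.add_one_mul_choose_eq n k
      zify at this
      rw [numDerangements_succ, pow_succ]
      linear_combination -(numDerangements k : ℤ) * this
    have halt := Int.alternating_sum_range_choose_of_ne (Nat.succ_ne_zero n)
    rw [sum_range_succ'] at halt ⊢
    simp only [hs, sum_add_distrib, ← mul_sum, ih]
    rw [Nat.factorial_succ]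
    push_cast
    simp at halt ⊢
    linarith

/-- The exponential generating function identity
`D(x) = 1 + (∑ k, (k - 1) x ^ k / k!) D(x)` for `D(x) = e⁻ˣ / (1 - x)`. For `k = 0` the
truncated difference `k - 1` vanishes. -/
theorem sum_choose_mul_pred (n : ℕ) :
    ∑ k ∈ range (n + 2), (n + 1).choose k * ((k - 1) * numDerangements (n + 1 - k))
      = numDerangements (n + 1) := by
  have h1 := sum_choose_mul_numDerangements n
  have h2 := sum_choose_mul_numDerangements (n + 1)
  rw [← sum_range_reflect] at h1 h2
  rw [sum_range_succ'] at h2 ⊢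
  have h3 : ∀ k ∈ range (n + 1), (n + 1).choose (k + 1) *
        ((k + 1 - 1) * numDerangements (n + 1 - (k + 1)))
      + (n + 1).choose (n + 1 + 1 - 1 - (k + 1)) * numDerangements (n + 1 + 1 - 1 - (k + 1))
      = (n + 1) * (n.choose (n + 1 - 1 - k) * numDerangements (n + 1 - 1 - k)) := by
    intro k hk
    have hk : k ≤ n := by simpa [Nat.lt_succ_iff] using hk
    have e1 : n + 1 + 1 - 1 - (k + 1) = n - k := by omega
    have e2 : n + 1 - (k + 1) = n - k := by omega
    have e3 : n + 1 - 1 - k = n - k := by omega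
    have e4 : (n + 1).choose (n - k) = (n + 1).choose (k + 1) := by
      rw [← Nat.choose_symm (by omega)]; congr 1; omega
    have e5 : n.choose (n - k) = n.choose k := Nat.choose_symm hk
    rw [e1, e2, e3, e4, e5, Nat.add_sub_cancel, ← mul_assoc (n + 1), Nat.add_one_mul_choose_eq]
    ring
  have h4 := sum_congr rfl h3
  rw [sum_add_distrib, ← mul_sum, h1] at h4
  rw [Nat.factorial_succ] at h2
  simp at h2 h4 ⊢
  omega

/-- Splitting off the last block `(B, a)`, the index in `Fin (#B - 1)` being `a - 1`. -/
def goodEquiv {E : Finset α} (hE : E.Nonempty) :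
    {L // Good E L} ≃ Σ B : E.powerset, Fin (#B.1 - 1) × {L // Good (E \ B.1) L} where
  toFun
    | ⟨[], h⟩ => absurd h hE.ne_empty
    | ⟨p :: L, h⟩ => ⟨⟨p.1, mem_powerset.2 h.1⟩,
        ⟨p.2 - 1, by have := h.2.1; have := h.2.2.1; dsimp only; omega⟩, ⟨L, h.2.2.2⟩⟩
  invFun q := ⟨(q.1.1, q.2.1.1 + 1) :: q.2.2.1, mem_powerset.1 q.1.2, Nat.succ_pos _,
    by have := q.2.1.2; dsimp only; omega, q.2.2.2⟩
  left_inv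
    | ⟨[], h⟩ => absurd h hE.ne_empty
    | ⟨p :: L, h⟩ => by
      have := h.2.1
      ext1
      simp only
      rw [Nat.sub_add_cancel this]
  right_inv q := by
    obtain ⟨⟨B, hB⟩, ⟨a, ha⟩, ⟨L, hL⟩⟩ := q
    rfl

/-- Block data on `E` are counted by the derangement numbers. -/
theorem card_good (E : Finset α) :
    Finite {L // Good E L} ∧ Nat.card {L // Good E L} = numDerangements #E := by
  induction E using Finset.strongInduction with
  | H E ih =>
    rcases E.eq_empty_or_nonempty with rfl | hE
    · have : ∀ L : List (Finset α × ℕ), Good ∅ L ↔ L = [] := by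
        intro L
        cases L with
        | nil => simp [Good]
        | cons p L =>
          simp only [Good, reduceCtorEq, iff_false]
          rintro ⟨h1, h2, h3, -⟩
          rw [subset_empty.1 h1] at h3
          simp at h3
      simp only [this]
      exact ⟨inferInstance, by simp⟩
    · -- A block with `Fin (#B - 1)` nonempty is nonempty, so its complement in `E` is smaller.
      have hlt : ∀ B : E.powerset, B.1.Nonempty → E \ B.1 ⊂ E := fun B hB =>
        sdiff_ssubset (mem_powerset.1 B.2) hB
      have hfin : ∀ B : E.powerset, Finite (Fin (#B.1 - 1) × {L // Good (E \ B.1) L}) := by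
        intro B
        rcases B.1.eq_empty_or_nonempty with h0 | hB
        · have : IsEmpty (Fin (#B.1 - 1)) := by rw [h0]; simpa using Fin.isEmpty'
          infer_instance
        · have := (ih _ (hlt B hB)).1
          infer_instance
      refine ⟨Finite.of_equiv _ (goodEquiv hE).symm, ?_⟩
      rw [Nat.card_congr (goodEquiv hE), Nat.card_sigma]
      have hc : ∀ B : E.powerset, Nat.card (Fin (#B.1 - 1) × {L // Good (E \ B.1) L})
          = (fun k => (k - 1) * numDerangements (#E - k)) #B.1 := by
        intro B
        rw [Nat.card_prod]
        rcases B.1.eq_empty_or_nonempty with h0 | hB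
        · simp [h0]
        · rw [(ih _ (hlt B hB)).2, card_sdiff_of_subset (mem_powerset.1 B.2)]
          simp
      rw [sum_congr rfl fun B _ => hc B,
        sum_coe_sort E.powerset fun B => (fun k => (k - 1) * numDerangements (#E - k)) #B,
        sum_powerset_apply_card fun k => (k - 1) * numDerangements (#E - k)]
      obtain ⟨m, hm⟩ := Nat.exists_eq_succ_of_ne_zero hE.card_pos.ne'
      rw [hm]
      simpa using sum_choose_mul_pred m

/-! ### From blocks to a permutation and a set -/

/-- Block data come from an order, given by a position function `f`, and a set `S`. -/
theorem exists_order {n : ℕ} {L : List (Finset (Fin n) × ℕ)} {E : Finset (Fin n)}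
    (hL : Good E L) : ∃ (f : Fin n → ℕ) (S : Finset (Fin n)), S ⊆ E ∧ #S = rk L ∧
      Set.InjOn f E ∧ ∀ I ⊆ E, Ind L I ↔ ∀ m, #{x ∈ I | f x < m} ≤ #{x ∈ S | f x < m} := by
  induction L generalizing E with
  | nil =>
    simp only [Good] at hL
    subst hL
    refine ⟨fun _ => 0, ∅, subset_rfl, rfl, by simp, fun I hI => ?_⟩
    simp [Ind, subset_empty.1 hI]
  | cons p L ih =>
    obtain ⟨f, S, hSE, hS, hf, hI⟩ := ih hL.2.2.2
    obtain ⟨hpE, h0, hlt, hL'⟩ := hL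
    obtain ⟨U, hU, hUc⟩ := exists_subset_card_eq hlt.le
    obtain ⟨N, hN⟩ : ∃ N, ∀ x, f x < N :=
      ⟨univ.sup f + 1, fun x => Nat.lt_succ_of_le (le_sup (mem_univ x))⟩
    -- Old elements come first, then the chosen part `U` of the last block, then its complement.
    let g : Fin n → ℕ := fun x =>
      if x ∈ p.1 then if x ∈ U then N + x else N + n + x else f x
    have g1 : ∀ x ∉ p.1, g x = f x := fun x hx => by simp [g, hx]
    have g2 : ∀ x ∈ U, g x = N + x := fun x hx => by simp [g, hx, hU hx]
    have g3 : ∀ x ∈ p.1, x ∉ U → g x = N + n + x := fun x hx hx' => by simp [g, hx, hx']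
    have hgN : ∀ x ∈ p.1, N ≤ g x := fun x hx => by
      by_cases h : x ∈ U
      · rw [g2 x h]; omega
      · rw [g3 x hx h]; omega
    have hdS : ∀ x ∈ S, x ∉ p.1 := fun x hx => (mem_sdiff.1 (hSE hx)).2
    have hdSU : Disjoint S U := disjoint_left.2 fun x hx hxU => hdS x hx (hU hxU)
    have hcS : #(S ∪ U) = p.2 + rk L := by
      rw [card_union_of_disjoint hdSU]; omega
    have hSf : ∀ m, {x ∈ S | g x < m} = {x ∈ S | f x < m} := fun m =>
      filter_congr fun x hx => by rw [g1 x (hdS x hx)]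
    have hIf : ∀ (I : Finset (Fin n)) m, {x ∈ I \ p.1 | g x < m} = {x ∈ I \ p.1 | f x < m} :=
      fun I m => filter_congr fun x hx => by rw [g1 x (mem_sdiff.1 hx).2]
    refine ⟨g, S ∪ U, union_subset (hSE.trans sdiff_subset) (hU.trans hpE), hcS, ?_, ?_⟩
    · intro x hx y hy hxy
      have hx' : x ∉ p.1 → x ∈ E \ p.1 := fun h => mem_sdiff.2 ⟨hx, h⟩
      have hy' : y ∉ p.1 → y ∈ E \ p.1 := fun h => mem_sdiff.2 ⟨hy, h⟩
      have := hN x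
      have := hN y
      have := x.2
      have := y.2
      by_cases hxp : x ∈ p.1 <;> by_cases hyp : y ∈ p.1
      · simp only [g, hxp, hyp, if_true] at hxy
        split_ifs at hxy <;> ext <;> omega
      · have := hgN x hxp; rw [g1 y hyp] at hxy; omega
      · have := hgN y hyp; rw [g1 x hxp] at hxy; omega
      · rw [g1 x hxp, g1 y hyp] at hxy
        exact hf (hx' hxp) (hy' hyp) hxy
    · intro I hIE
      have hIp : I \ p.1 ⊆ E \ p.1 := sdiff_subset_sdiff hIE le_rfl
      constructor
      · rintro ⟨h1, h2⟩ m
        have h1c := h1.card_le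
        have h1m := (hI _ hIp).1 h1 m
        rw [← hIf, ← hSf] at h1m
        by_cases hm : m ≤ N + n
        · -- Below the complement of `U`, only elements of `U` can be added.
          have hsub : {x ∈ I | g x < m} ⊆ {x ∈ I \ p.1 | g x < m} ∪ {x ∈ U | g x < m} := by
            intro x hx
            rw [mem_filter] at hx
            by_cases hp : x ∈ p.1
            · have hxU : x ∈ U := by
                by_contra hxU
                have := g3 x hp hxU
                omega
              exact mem_union_right _ (mem_filter.2 ⟨hxU, hx.2⟩)
            · exact mem_union_left _ (mem_filter.2 ⟨mem_sdiff.2 ⟨hx.1, hp⟩, hx.2⟩)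
          rw [filter_union, card_union_of_disjoint (disjoint_filter_filter hdSU)]
          exact (card_le_card hsub).trans ((card_union_le _ _).trans (by omega))
        · have : {x ∈ S ∪ U | g x < m} = S ∪ U := by
            refine filter_true_of_mem fun x hx => ?_
            have := x.2
            rcases mem_union.1 hx with h | h
            · rw [g1 x (hdS x h)]; have := hN x; omega
            · rw [g2 x h]; omega
          rw [this, hcS]
          exact (card_filter_le _ _).trans h2
      · intro h
        refine ⟨(hI _ hIp).2 fun m => ?_, ?_⟩
        · have hm := h (min m N)
          have e1 : {x ∈ S ∪ U | g x < min m N} = {x ∈ S | f x < m} := by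
            ext x
            simp only [mem_filter, mem_union]
            constructor
            · rintro ⟨hx | hx, hlt⟩
              · rw [g1 x (hdS x hx)] at hlt; exact ⟨hx, by omega⟩
              · rw [g2 x hx] at hlt; omega
            · rintro ⟨hx, hlt⟩
              have := hN x
              exact ⟨Or.inl hx, by rw [g1 x (hdS x hx)]; omega⟩
          rw [e1] at hm
          refine (card_le_card ?_).trans hm
          intro x hx
          simp only [mem_filter, mem_sdiff] at hx ⊢
          have := hN x
          exact ⟨hx.1.1, by rw [g1 x hx.1.2]; omega⟩
        · have hm := h (N + n + n)
          have : {x ∈ I | g x < N + n + n} = I := by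
            refine filter_true_of_mem fun x _ => ?_
            have := x.2
            have := hN x
            simp only [g]
            split_ifs <;> omega
          rw [this] at hm
          exact hm.trans ((card_filter_le _ _).trans hcS.le)

/-- The family of bases attached to a list of blocks. -/
def bases {n : ℕ} (L : List (Finset (Fin n) × ℕ)) : Set (Finset (Fin n)) :=
  {T | Ind L T ∧ #T = rk L}

theorem isSchubertFamily_bases {n : ℕ} {L : List (Finset (Fin n) × ℕ)} (hL : Good univ L) :
    IsSchubertFamily (bases L) := by
  obtain ⟨f, S, -, hS, hf, hI⟩ := exists_order hL
  have hinj : Function.Injective f := fun x y h => hf (mem_univ x) (mem_univ y) h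
  let w := Tuple.sort f
  have hw : StrictMono (f ∘ w) :=
    (Tuple.monotone_sort f).strictMono_of_injective (hinj.comp w.injective)
  have hle : ∀ x y, w.symm x ≤ w.symm y ↔ f x ≤ f y := fun x y => by
    rw [← hw.le_iff_le]; simp
  refine ⟨w, S, ?_⟩
  ext T
  simp only [bases, Set.mem_ofPred_eq, galeLE, hle, hS]
  rw [and_comm, hI T (subset_univ T)]
  refine and_congr_right fun hT => ⟨fun h j => ?_, fun h m => ?_⟩
  · simpa only [Nat.lt_succ_iff] using h (f j + 1)
  · -- The constraint at level `m` is the one at the last element below `m`, if there is any.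
    by_cases hne : ({x | f x < m} : Finset (Fin n)).Nonempty
    · obtain ⟨j, hj, hmax⟩ := exists_max_image _ f hne
      have e : ∀ x, f x < m ↔ f x ≤ f j := fun x =>
        ⟨fun hx => hmax x (by simpa using hx), fun hx => hx.trans_lt (by simpa using hj)⟩
      simp only [e]
      exact h j
    · rw [not_nonempty_iff_eq_empty, filter_eq_empty_iff] at hne
      rw [filter_false_of_mem fun x _ => hne (mem_univ x)]
      simp

/-! ### From a permutation and a set to blocks -/

/-- The first `j` elements in the order `w`. -/
def pre {n : ℕ} (w : Equiv.Perm (Fin n)) (j : ℕ) : Finset (Fin n) :=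
  {x | (w.symm x : ℕ) < j}

/-- The Gale order in terms of initial segments. -/
theorem galeLE_iff {n : ℕ} (w : Equiv.Perm (Fin n)) (S T : Finset (Fin n)) :
    galeLE w S T ↔ ∀ i, #(T ∩ pre w i) ≤ #(S ∩ pre w i) := by
  have e : ∀ (j : Fin n) (U : Finset (Fin n)),
      U.filter (fun t => w.symm t ≤ w.symm j) = U ∩ pre w (w.symm j + 1) := by
    intro j U
    ext x
    simp only [pre, mem_filter, mem_inter, mem_univ, true_and, Fin.le_def, Nat.lt_succ_iff]
  simp only [galeLE, e]
  refine ⟨fun h i => ?_, fun h j => h _⟩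
  rcases Nat.eq_zero_or_pos i with rfl | hi
  · simp [pre]
  · have key : ∀ i, 0 < i → i ≤ n → #(T ∩ pre w i) ≤ #(S ∩ pre w i) := by
      intro i hi hin
      have := h (w ⟨i - 1, by omega⟩)
      simpa [Nat.sub_add_cancel hi] using this
    rcases Nat.eq_zero_or_pos n with rfl | hn
    · simp [Subsingleton.elim T S]
    · by_cases hin : i ≤ n
      · exact key i hi hin
      · have : pre w i = pre w n := by
          ext x
          have := (w.symm x).2
          simp only [pre, mem_filter, mem_univ, true_and]
          omega
        rw [this]
        exact key n hn le_rfl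

theorem pre_mono {n : ℕ} (w : Equiv.Perm (Fin n)) {i j : ℕ} (h : i ≤ j) : pre w i ⊆ pre w j := by
  intro x hx
  simp only [pre, mem_filter, mem_univ, true_and] at hx ⊢
  omega

theorem pre_succ {n : ℕ} (w : Equiv.Perm (Fin n)) (j : Fin n) :
    pre w (j + 1) = insert (w j) (pre w j) := by
  ext x
  simp only [pre, mem_filter, mem_univ, true_and, mem_insert]
  rw [← Equiv.symm_apply_eq, Fin.ext_iff]
  omega

theorem notMem_pre {n : ℕ} (w : Equiv.Perm (Fin n)) (j : Fin n) : w j ∉ pre w j := by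
  simp [pre]

/-- One step along the order `w` imposes one new constraint, on the total cardinality. -/
theorem galeLE_step {n : ℕ} {w : Equiv.Perm (Fin n)} {S I : Finset (Fin n)} {j : Fin n}
    (hI : I ⊆ pre w (j + 1)) :
    galeLE w S I ↔ galeLE w S (I.erase (w j)) ∧ #I ≤ #(S ∩ pre w (j + 1)) := by
  simp only [galeLE_iff]
  constructor
  · intro h
    refine ⟨fun i => (card_le_card (inter_subset_inter_right (erase_subset _ _))).trans (h i), ?_⟩
    have := h (j + 1)
    rwa [inter_eq_left.2 hI] at this
  · rintro ⟨h1, h2⟩ i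
    by_cases hij : i ≤ j
    · have e : I ∩ pre w i = I.erase (w j) ∩ pre w i := by
        rw [erase_inter, erase_eq_of_notMem]
        exact fun h => notMem_pre w j (pre_mono w hij (mem_inter.1 h).2)
      rw [e]
      exact h1 i
    · exact (card_le_card inter_subset_left).trans (h2.trans
        (card_le_card (inter_subset_inter_left (pre_mono w (by omega)))))

/-- Reading the word of `S` along `w` letter by letter: an initial segment splits into complete
blocks `L` on `E`, followed by a run `A` of elements of `S`. -/
theorem exists_blocks {n : ℕ} {w : Equiv.Perm (Fin n)} {S : Finset (Fin n)}
    (h0 : ∀ j : Fin n, (j : ℕ) = 0 → w j ∈ S) (j : ℕ) (hj : j ≤ n) :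
    ∃ (L : List (Finset (Fin n) × ℕ)) (E A : Finset (Fin n)), Good E L ∧ Disjoint E A ∧
      E ∪ A = pre w j ∧ #(S ∩ pre w j) = rk L + #A ∧
      ∀ I, Ind L (I \ A) ↔ I ⊆ pre w j ∧ galeLE w S I := by
  induction j with
  | zero =>
    refine ⟨[], ∅, ∅, rfl, by simp, by simp [pre], by simp [pre, rk], fun I => ?_⟩
    simp only [Ind, sdiff_empty, pre, Nat.not_lt_zero, filter_false, subset_empty]
    refine ⟨fun h => ⟨h, ?_⟩, fun h => h.1⟩
    subst h
    intro j
    simp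
  | succ j ih =>
    obtain ⟨L, E, A, hL, hd, hEA, hc, hI⟩ := ih (by omega)
    let j' : Fin n := ⟨j, by omega⟩
    have hpre : pre w (j + 1) = insert (w j') (pre w j) := pre_succ w j'
    have hx : w j' ∉ pre w j := notMem_pre w j'
    have hxE : w j' ∉ E := fun h => hx (hEA ▸ mem_union_left _ h)
    have hxA : w j' ∉ A := fun h => hx (hEA ▸ mem_union_right _ h)
    have hstep : ∀ I, (I ⊆ pre w (j + 1) ∧ galeLE w S I) ↔
        Ind L (I.erase (w j') \ A) ∧ #I ≤ #(S ∩ pre w (j + 1)) := by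
      intro I
      rw [hI, ← subset_insert_iff, ← hpre, and_assoc]
      exact and_congr_right fun h => galeLE_step (j := j') h
    have he : ∀ I B : Finset (Fin n), I.erase (w j') \ B = I \ insert (w j') B := by
      intro I B
      ext x
      simp only [mem_sdiff, mem_erase, mem_insert]
      tauto
    simp only [hstep]
    by_cases hxS : w j' ∈ S
    · have hc' : #(S ∩ pre w (j + 1)) = rk L + #(insert (w j') A) := by
        rw [hpre, inter_insert_of_mem hxS, card_insert_of_notMem (by simp [hx]), hc,
          card_insert_of_notMem hxA, add_assoc]
      refine ⟨L, E, insert (w j') A, hL, ?_, ?_, hc', fun I => ?_⟩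
      · rw [disjoint_insert_right]; exact ⟨hxE, hd⟩
      · rw [union_insert, hEA, hpre]
      · rw [hc', he]
        refine ⟨fun h => ⟨h, ?_⟩, fun h => h.1⟩
        have h1 := h.card_le
        have h2 := card_le_card_sdiff_add_card (s := I) (t := insert (w j') A)
        omega
    · have hc' : #(S ∩ pre w (j + 1)) = rk L + #A := by
        rw [hpre, inter_insert_of_notMem hxS, hc]
      rcases A.eq_empty_or_nonempty with rfl | hA
      · cases L with
        | nil =>
          simp only [Good] at hL
          subst hL
          -- The very first letter lies in `S`.
          have hj0 : j = 0 := by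
            by_contra hne
            have : w ⟨0, by omega⟩ ∈ pre w j := by simp [pre]; omega
            rw [← hEA] at this
            simp at this
          exact absurd (h0 j' hj0) hxS
        | cons p L =>
          -- A further letter outside `S` enlarges the last block.
          obtain ⟨h1, h2, h3, h4⟩ := hL
          have hxp : w j' ∉ p.1 := fun h => hxE (h1 h)
          refine ⟨(insert (w j') p.1, p.2) :: L, insert (w j') E, ∅, ⟨?_, h2, ?_, ?_⟩, by simp,
            ?_, ?_, fun I => ?_⟩
          · exact insert_subset_insert _ h1
          · dsimp only
            rw [card_insert_of_notMem hxp]; omega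
          · dsimp only
            have : insert (w j') E \ insert (w j') p.1 = E \ p.1 := by
              ext y
              simp only [mem_sdiff, mem_insert]
              constructor
              · rintro ⟨rfl | h, h'⟩ <;> tauto
              · rintro ⟨h, h'⟩
                refine ⟨Or.inr h, ?_⟩
                rintro (rfl | h'')
                · exact hxE h
                · exact h' h''
            rwa [this]
          · rw [union_empty] at hEA ⊢; rw [hEA, hpre]
          · rw [hc']; rfl
          · rw [hc']
            simp only [Ind, sdiff_empty, card_empty, add_zero, rk]
            rw [he]
            refine ⟨fun h => ⟨⟨h.1, (card_le_card (erase_subset _ _)).trans h.2⟩, h.2⟩,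
              fun h => ⟨h.1.1, h.2⟩⟩
      · -- The first letter outside `S` after a run of letters of `S` completes a block.
        refine ⟨(insert (w j') A, #A) :: L, E ∪ insert (w j') A, ∅, ⟨?_, hA.card_pos, ?_, ?_⟩,
          by simp, ?_, ?_, fun I => ?_⟩
        · exact subset_union_right
        · dsimp only
          rw [card_insert_of_notMem hxA]; omega
        · dsimp only
          rw [union_sdiff_cancel_right (by rw [disjoint_insert_right]; exact ⟨hxE, hd⟩)]
          exact hL
        · rw [union_empty, union_insert, hEA, hpre]
        · rw [hc', card_empty, add_zero, rk, add_comm]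
        · rw [hc', sdiff_empty, he, add_comm]
          rfl

theorem exists_good {n : ℕ} {ℬ : Set (Finset (Fin n))} (h : IsSchubertFamily ℬ)
    (hl : FamLoopless ℬ) (hc : FamColoopless ℬ) : ∃ L, Good univ L ∧ bases L = ℬ := by
  obtain ⟨w, S, rfl⟩ := h
  have h0 : ∀ j : Fin n, (j : ℕ) = 0 → w j ∈ S := by
    intro j hj
    obtain ⟨B, ⟨-, hB⟩, hjB⟩ := hl (w j)
    have hpos : 0 < #(S.filter fun s => w.symm s ≤ w.symm (w j)) :=
      lt_of_lt_of_le (card_pos.2 ⟨w j, by simp [hjB]⟩) (hB (w j))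
    obtain ⟨s, hs⟩ := card_pos.1 hpos
    rw [mem_filter, Equiv.symm_apply_apply, Fin.le_def, hj] at hs
    have : w.symm s = j := Fin.ext (by omega)
    rw [← this, Equiv.apply_symm_apply]
    exact hs.1
  obtain ⟨L, E, A, hL, hd, hEA, hcard, hI⟩ := exists_blocks h0 n le_rfl
  have hpre : pre w n = univ := by ext x; simp [pre]
  rw [hpre, inter_univ] at hcard
  simp only [hpre, subset_univ, true_and] at hI
  -- A final run of letters of `S` would consist of coloops.
  have hA : A = ∅ := by
    by_contra hne
    obtain ⟨x, hx⟩ := nonempty_iff_ne_empty.2 hne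
    obtain ⟨B, ⟨hB1, hB2⟩, hxB⟩ := hc x
    have h1 := ((hI B).2 hB2).card_le
    have h2 : #(B ∩ A) < #A :=
      card_lt_card ⟨inter_subset_right, fun h => hxB (mem_inter.1 (h hx)).1⟩
    have h3 := card_sdiff_add_card_inter B A
    omega
  subst hA
  rw [union_empty, hpre] at hEA
  subst hEA
  refine ⟨L, hL, ?_⟩
  ext T
  have := hI T
  rw [sdiff_empty] at this
  simp only [bases, Set.mem_ofPred_eq, this, hcard, card_empty, add_zero]
  exact and_comm

theorem bases_injOn {n : ℕ} :
    Set.InjOn bases {L : List (Finset (Fin n) × ℕ) | Good univ L} := by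
  intro L hL L' hL' h
  have key : ∀ {L L' : List (Finset (Fin n) × ℕ)}, Good univ L → bases L = bases L' →
      ∀ I, Ind L I → Ind L' I := by
    intro L L' hL h I hI
    obtain ⟨T, hIT, hT⟩ := hI.exists_basis hL
    have : T ∈ bases L' := h ▸ hT
    exact this.1.mono hIT
  exact eq_of_ind_iff hL hL' fun I => ⟨key hL h I, key hL' h.symm I⟩

end SchubertCount


/-- The number of basis families of loopless and coloopless Schubert matroids on `[n]`
equals the number of derangements of an `n`-element set. -/
theorem card_loopless_coloopless_schubert_eq_numDerangements (n : ℕ) (hn : 1 ≤ n) :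
    {ℬ : Set (Finset (Fin n)) |
        IsSchubertFamily ℬ ∧ FamLoopless ℬ ∧ FamColoopless ℬ}.ncard =
      numDerangements n := by
  have himg : {ℬ : Set (Finset (Fin n)) |
        IsSchubertFamily ℬ ∧ FamLoopless ℬ ∧ FamColoopless ℬ} =
      SchubertCount.bases '' {L | SchubertCount.Good univ L} := by
    ext ℬ
    constructor
    · rintro ⟨h, hl, hc⟩
      exact SchubertCount.exists_good h hl hc
    · rintro ⟨L, hL, rfl⟩
      refine ⟨SchubertCount.isSchubertFamily_bases hL, fun i => ?_, fun i => ?_⟩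
      · obtain ⟨T, hiT, hT⟩ := (SchubertCount.ind_singleton hL (mem_univ i)).exists_basis hL
        exact ⟨T, hT, singleton_subset_iff.1 hiT⟩
      · obtain ⟨T, hiT, hT⟩ := SchubertCount.exists_basis_notMem hL (mem_univ i)
        exact ⟨T, hT, hiT⟩
  rw [himg, SchubertCount.bases_injOn.ncard_image]
  have hcard := (SchubertCount.card_good (univ : Finset (Fin n))).2
  rw [card_univ, Fintype.card_fin] at hcard
  exact hcard
end

section
/- Let μ : 2^{[n]} → ℝ be submodular with μ(∅) = 0, and let B(μ) ⊆ ℝⁿ be its base polytope. Let v ∈ ℝⁿ be the greedy vector, defined by v_ℓ = μ({1,…,ℓ}) − μ({1,…,ℓ−1}) for ℓ = 1,…,n. Then: (a) v ∈ B(μ), so that ∑_{i=1}^{ℓ} v_i = μ({1,…,ℓ}) for every ℓ; and (b) there exists a continuous map H : B(μ) × [0,1] → B(μ) with H(x,0) = x and H(x,1) = v for all x ∈ B(μ), H(v,t) = v for all t ∈ [0,1], and such that for every x ∈ B(μ) and every ℓ ∈ {1,…,n} the function t ↦ ∑_{i=1}^{ℓ} H(x,t)_i is monotone nondecreasing on [0,1].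 In other words, B(μ) strongly deformation retracts onto the greedy vertex by a homotopy along which all initial-interval partial sums are nondecreasing. -/
/-!
The greedy vector lies in the base polytope by the standard argument: building up a set `A` by
adding its elements in increasing order, submodularity bounds each coordinate of the greedy vector
by the marginal value of the element added (`sum_greedyVec_le`), and on lower sets the sum
telescopes to an equality (`sum_greedyVec_of_isLowerSet`).

The base polytope is convex, so the straight-line homotopy `x ↦ (1 - t) x + t v` towards the greedy
vector `v` stays inside it. Its partial sum over an initial interval `I` is affine in `t`, starting
at `∑ j ∈ I, x j ≤ μ I` and ending at `μ I`, hence it is nondecreasing.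
-/

open Finset

/-- The base polytope of a real-valued submodular function `μ` on `[n]`. -/
def basePolyR {n : ℕ} (μ : Finset (Fin n) → ℝ) : Set (Fin n → ℝ) :=
  {x | ∑ i, x i = μ univ ∧ ∀ A : Finset (Fin n), ∑ i ∈ A, x i ≤ μ A}

/-- The greedy vector of `μ`: its `ℓ`-th coordinate is `μ({1,…,ℓ}) − μ({1,…,ℓ−1})`. -/
def greedyVec {n : ℕ} (μ : Finset (Fin n) → ℝ) : Fin n → ℝ :=
  fun i => μ (Finset.Iic i) - μ (Finset.Iio i)

lemma sum_greedyVec_le {n : ℕ} (μ : Finset (Fin n) → ℝ) (h0 : μ ∅ = 0)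
    (hsub : ∀ A B : Finset (Fin n), μ (A ∪ B) + μ (A ∩ B) ≤ μ A + μ B)
    (A : Finset (Fin n)) : ∑ i ∈ A, greedyVec μ i ≤ μ A := by
  induction A using Finset.induction_on_max with
  | empty => simp [h0]
  | insert a s hs ih =>
    have ha : a ∉ s := fun h => lt_irrefl a (hs a h)
    have h := hsub (insert a s) (Iio a)
    have hunion : insert a s ∪ Iio a = Iic a := by
      ext j
      simp only [mem_union, mem_insert, mem_Iio, mem_Iic]
      grind
    have hinter : insert a s ∩ Iio a = s := by
      ext j
      simp only [mem_inter, mem_insert, mem_Iio]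
      grind
    rw [hunion, hinter] at h
    rw [sum_insert ha, greedyVec]
    linarith

lemma sum_greedyVec_of_isLowerSet {n : ℕ} (μ : Finset (Fin n) → ℝ) (h0 : μ ∅ = 0)
    (A : Finset (Fin n)) (hA : ∀ i ∈ A, ∀ j ≤ i, j ∈ A) :
    ∑ i ∈ A, greedyVec μ i = μ A := by
  induction A using Finset.induction_on_max with
  | empty => simp [h0]
  | insert a s hs ih =>
    have ha : a ∉ s := fun h => lt_irrefl a (hs a h)
    -- A lower set with largest element `a` is exactly `Iic a`.
    have hlow : s = Iio a := by
      ext j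
      simp only [mem_Iio]
      refine ⟨hs j, fun hj => ?_⟩
      exact (mem_insert.mp (hA a (mem_insert_self a s) j hj.le)).resolve_left hj.ne
    have hins : insert a s = Iic a := by
      rw [hlow]
      exact Finset.Iio_insert a
    rw [sum_insert ha, ih (by rw [hlow]; grind), hins, greedyVec, hlow]
    ring

lemma greedyVec_mem_basePolyR {n : ℕ} (μ : Finset (Fin n) → ℝ) (h0 : μ ∅ = 0)
    (hsub : ∀ A B : Finset (Fin n), μ (A ∪ B) + μ (A ∩ B) ≤ μ A + μ B) :
    greedyVec μ ∈ basePolyR μ :=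
  ⟨sum_greedyVec_of_isLowerSet μ h0 univ (by simp), sum_greedyVec_le μ h0 hsub⟩

lemma sum_segment {n : ℕ} (A : Finset (Fin n)) (x v : Fin n → ℝ) (a b : ℝ) :
    ∑ i ∈ A, (a • x + b • v) i = a * ∑ i ∈ A, x i + b * ∑ i ∈ A, v i := by
  simp [sum_add_distrib, mul_sum]

lemma convex_basePolyR {n : ℕ} (μ : Finset (Fin n) → ℝ) : Convex ℝ (basePolyR μ) := by
  intro x hx y hy a b ha hb hab
  refine ⟨?_, fun A => ?_⟩
  · rw [sum_segment, hx.1, hy.1, ← add_mul, hab, one_mul]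
  · rw [sum_segment]
    calc a * ∑ i ∈ A, x i + b * ∑ i ∈ A, y i ≤ a * μ A + b * μ A := by
          gcongr
          · exact hx.2 A
          · exact hy.2 A
      _ = μ A := by rw [← add_mul, hab, one_mul]

/-- The base polytope of a submodular function strongly deformation retracts onto its
greedy vertex, by a homotopy along which all initial-interval partial sums are
nondecreasing. -/
theorem basePoly_deformation_retract_greedy (n : ℕ) (hn : 1 ≤ n)
    (μ : Finset (Fin n) → ℝ) (h0 : μ ∅ = 0)
    (hsub : ∀ A B : Finset (Fin n), μ (A ∪ B) + μ (A ∩ B) ≤ μ A + μ B) :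
    (greedyVec μ ∈ basePolyR μ ∧
      ∀ i : Fin n, ∑ j ∈ Finset.Iic i, greedyVec μ j = μ (Finset.Iic i)) ∧
    ∃ H : ↥(basePolyR μ) × ↥(Set.Icc (0 : ℝ) 1) → ↥(basePolyR μ),
      Continuous H ∧
      (∀ x : ↥(basePolyR μ), H (x, ⟨0, Set.left_mem_Icc.mpr zero_le_one⟩) = x) ∧
      (∀ x : ↥(basePolyR μ),
        (H (x, ⟨1, Set.right_mem_Icc.mpr zero_le_one⟩) : Fin n → ℝ) = greedyVec μ) ∧
      (∀ (hv : greedyVec μ ∈ basePolyR μ) (t : ↥(Set.Icc (0 : ℝ) 1)),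
        H (⟨greedyVec μ, hv⟩, t) = ⟨greedyVec μ, hv⟩) ∧
      (∀ (x : ↥(basePolyR μ)) (i : Fin n),
        Monotone fun t : ↥(Set.Icc (0 : ℝ) 1) =>
          ∑ j ∈ Finset.Iic i, (H (x, t) : Fin n → ℝ) j) := by
  have hv := greedyVec_mem_basePolyR μ h0 hsub
  have hpre : ∀ i : Fin n, ∑ j ∈ Finset.Iic i, greedyVec μ j = μ (Finset.Iic i) := fun i =>
    sum_greedyVec_of_isLowerSet μ h0 (Iic i) fun k hk j hj =>
      mem_Iic.mpr (hj.trans (mem_Iic.mp hk))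
  refine ⟨⟨hv, hpre⟩, fun p => ⟨(1 - (p.2 : ℝ)) • (p.1 : Fin n → ℝ) + (p.2 : ℝ) • greedyVec μ,
    convex_basePolyR μ p.1.2 hv (sub_nonneg.mpr p.2.2.2) p.2.2.1 (sub_add_cancel _ _)⟩,
    by fun_prop, fun x => ?_, fun x => ?_, fun _ t => ?_, fun x i s t hst => ?_⟩
  · ext1
    simp
  · simp
  · ext1
    simp [← add_smul]
  · have hst' : (s : ℝ) ≤ t := hst
    have hx := x.2.2 (Iic i)
    simp only [sum_segment, hpre]
    nlinarith
end

section
/- The class of Schubert matroids on [n] is closed under truncation: if ℬ is the basis family of a Schubert matroid on [n] whose members all have cardinality k with k ≥ 1, then the family {I ⊆ [n] : |I| = k − 1 and I ⊆ B for some B ∈ ℬ} is also the basis family of a Schubert matroid on [n]. -/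
/-!
Let `ℬ` be the Schubert family of `(w, S)`, so that `S ∈ ℬ` and `#S = k`. The truncation is the
Schubert family of `(w, S')`, where `S'` is `S` without its `w`-last element `m`: the number of
elements of `S'` among those `≤_w j` is the minimum of `k - 1` and the corresponding number for `S`,
which bounds the number for every `(k - 1)`-subset of a member of `ℬ`.
Conversely, a `(k - 1)`-set `I` with `S' ≤_w I` extends to a member of `ℬ` by adding the `w`-last
element `x` outside `I`. For `j` before `x` the count for `I` is unchanged. For `j` at or after
`x`, the new set contains everything after `j`, hence has at least as many elements after `j` as
`S` has, and so at most as many up to `j`.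
-/

open Finset

/-- Every member of the truncation lies above `S.erase m` in the Gale order, for `m` the `w`-last
element of `S`. -/
lemma galeLE_erase_of_subset {n : ℕ} {w : Equiv.Perm (Fin n)} {S I B : Finset (Fin n)} {m : Fin n}
    (hm : m ∈ S) (hmax : ∀ s ∈ S, w.symm s ≤ w.symm m) (hI : I.card = S.card - 1)
    (hB : galeLE w S B) (hIB : I ⊆ B) : galeLE w (S.erase m) I := by
  intro j
  by_cases hj : w.symm m ≤ w.symm j
  · rw [Finset.filter_true_of_mem (s := S.erase m)
      fun s hs => (hmax s (Finset.mem_of_mem_erase hs)).trans hj, Finset.card_erase_of_mem hm, ← hI]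
    exact Finset.card_filter_le _ _
  · rw [Finset.filter_erase, Finset.erase_eq_of_notMem (by simp [hj])]
    exact (Finset.card_le_card (Finset.filter_subset_filter _ hIB)).trans (hB j)

/-- Adding to `I` the `w`-last element outside `I` gives a set above `S` in the Gale order. -/
lemma galeLE_insert {n : ℕ} {w : Equiv.Perm (Fin n)} {S I : Finset (Fin n)} {m x : Fin n}
    (hmax : ∀ y, y ∉ I → w.symm y ≤ w.symm x)
    (hcard : (insert x I).card = S.card) (hI : galeLE w (S.erase m) I) :
    galeLE w S (insert x I) := by
  intro j
  by_cases hj : w.symm x ≤ w.symm j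
  · -- Compare the elements strictly after `j`, all of which lie in `insert x I`.
    have hsub : (S.filter fun s => ¬ w.symm s ≤ w.symm j) ⊆
        (insert x I).filter fun s => ¬ w.symm s ≤ w.symm j := by
      intro y hy
      rw [Finset.mem_filter] at hy ⊢
      refine ⟨Finset.mem_insert_of_mem ?_, hy.2⟩
      by_contra hyI
      exact hy.2 ((hmax y hyI).trans hj)
    have h1 := Finset.card_le_card hsub
    have h2 := Finset.card_filter_add_card_filter_not (s := S) (fun s => w.symm s ≤ w.symm j)
    have h3 := Finset.card_filter_add_card_filter_not (s := insert x I)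
      (fun s => w.symm s ≤ w.symm j)
    omega
  · rw [Finset.filter_insert, if_neg hj]
    exact (hI j).trans
      (Finset.card_le_card (Finset.filter_subset_filter _ (Finset.erase_subset _ _)))

/-- Schubert matroids are closed under truncation: if all members of the basis family of
a Schubert matroid have cardinality `k ≥ 1`, then the family of `(k−1)`-element subsets
contained in some member is again the basis family of a Schubert matroid. -/
theorem schubert_closed_under_truncation {n : ℕ} (ℬ : Set (Finset (Fin n)))
    (h : IsSchubertFamily ℬ) (k : ℕ) (hk : 1 ≤ k)
    (hcard : ∀ B ∈ ℬ, B.card = k) :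
    IsSchubertFamily
      {I : Finset (Fin n) | I.card = k - 1 ∧ ∃ B ∈ ℬ, I ⊆ B} := by
  obtain ⟨w, S, rfl⟩ := h
  obtain rfl : S.card = k := hcard S ⟨rfl, fun j => le_rfl⟩
  obtain ⟨m, hm, hmax⟩ := Finset.exists_max_image S w.symm (Finset.card_pos.mp hk)
  refine ⟨w, S.erase m, ?_⟩
  ext I
  simp only [Set.mem_ofPred_eq, Finset.card_erase_of_mem hm]
  refine and_congr_right fun hI => ⟨?_, fun hg => ?_⟩
  · rintro ⟨B, ⟨-, hB⟩, hIB⟩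
    exact galeLE_erase_of_subset hm hmax hI hB hIB
  · have hne : Iᶜ.Nonempty := by
      have h1 := Finset.card_le_univ S
      rw [← Finset.card_pos, Finset.card_compl]
      omega
    obtain ⟨x, hx, hxmax⟩ := Finset.exists_max_image Iᶜ w.symm hne
    rw [Finset.mem_compl] at hx
    have hc : (insert x I).card = S.card := by
      rw [Finset.card_insert_of_notMem hx]
      omega
    exact ⟨insert x I, ⟨hc, galeLE_insert
      (fun y hy => hxmax y (Finset.mem_compl.mpr hy)) hc hg⟩, Finset.subset_insert x I⟩
end

section
/- Let ℬ be the basis family of a Schubert matroid on [n], and let S, T ⊆ [n] be disjoint subsets. Then the face of the base polytope cut out by the cube conditions, F = {x ∈ BP(ℬ) : x_i = 0 for all i ∈ S and x_i = 1 for all i ∈ T}, is either empty or equal to BP(ℬ') + m for the basis family ℬ' of some Schubert matroid on [n] and some m ∈ ℤⁿ. -/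
/-!
Cutting `conv {e_B : B ∈ ℬ}` by cube conditions keeps exactly the hull of those `e_B` which satisfy
the conditions (`cube_face_eq`), because all coordinates lie in `[0, 1]`. These are the bases `B`
with `B ∩ S = ∅` and `T ⊆ B`; removing `T` from each of them translates the hull by `-e_T` and
leaves a family of subsets `C` of `U = (S ∪ T)ᶜ` of fixed size, described by upper bounds on the
number of elements of `C` in each initial segment of the order `≤_w`.

If this family is nonempty, it has a Gale-minimum `M` (`exists_gale_min`): a member minimizing the
sum of the positions is one, since a member `C` exceeding `M` on some initial segment would permit
an exchange in `M` that moves an element to an earlier position. So the family consists of all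
`C ⊆ U` with `|C| = |M|` and `M ≤_w C`. Finally, moving the complement of `U` to the front of the
order makes the condition `C ⊆ U` a consequence of the Gale condition (`exists_perm_gale`).
-/

open Finset

/-- The 0/1 indicator vector of a subset of `[n]`. -/
def eVec {n : ℕ} (A : Finset (Fin n)) : Fin n → ℝ := fun i => if i ∈ A then 1 else 0

/-- The base polytope of a family of subsets of `[n]`. -/
noncomputable def BP {n : ℕ} (ℬ : Set (Finset (Fin n))) : Set (Fin n → ℝ) :=
  convexHull ℝ {x | ∃ B ∈ ℬ, x = eVec B}

/-! ### Faces of the base polytope -/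

/-- The face of the polytope cut out by the cube conditions is spanned by the vertices on it. -/
lemma cube_face_eq {n : ℕ} (ℬ : Set (Finset (Fin n))) (S T : Finset (Fin n)) :
    {x ∈ BP ℬ | (∀ i ∈ S, x i = 0) ∧ ∀ i ∈ T, x i = 1} =
      BP {B ∈ ℬ | Disjoint S B ∧ T ⊆ B} := by
  set ℬ₀ := {B ∈ ℬ | Disjoint S B ∧ T ⊆ B} with hℬ₀
  apply Set.Subset.antisymm
  · -- The points of the cube that lie in the smaller hull as soon as they satisfy the conditions
    -- form a convex set: a proper convex combination attains an extreme coordinate value only if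
    -- both of its end points do.
    have key : BP ℬ ⊆ {x | (∀ i, 0 ≤ x i ∧ x i ≤ 1) ∧
        (((∀ i ∈ S, x i = 0) ∧ ∀ i ∈ T, x i = 1) → x ∈ BP ℬ₀)} := by
      apply convexHull_min
      · rintro x ⟨B, hB, rfl⟩
        refine ⟨fun i => ?_, fun ⟨h0, h1⟩ => subset_convexHull ℝ _ ⟨B, ⟨hB, ?_, ?_⟩, rfl⟩⟩
        · unfold eVec; split_ifs <;> norm_num
        · rw [Finset.disjoint_left]
          intro i hi hiB
          have := h0 i hi
          simp [eVec, hiB] at this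
        · intro i hi
          by_contra hiB
          have := h1 i hi
          simp [eVec, hiB] at this
      · rw [convex_iff_forall_pos]
        rintro x ⟨hx, hx'⟩ y ⟨hy, hy'⟩ a b ha hb hab
        refine ⟨fun i => ?_, fun ⟨h0, h1⟩ => ?_⟩
        · have := hx i
          have := hy i
          simp only [Pi.add_apply, Pi.smul_apply, smul_eq_mul]
          constructor <;> nlinarith
        · simp only [Pi.add_apply, Pi.smul_apply, smul_eq_mul] at h0 h1
          refine (convex_convexHull ℝ _) (hx' ⟨fun i hi => ?_, fun i hi => ?_⟩)
            (hy' ⟨fun i hi => ?_, fun i hi => ?_⟩) ha.le hb.le hab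
          · have := hx i; have := hy i; have := h0 i hi; nlinarith
          · have := hx i; have := hy i; have := h1 i hi; nlinarith
          · have := hx i; have := hy i; have := h0 i hi; nlinarith
          · have := hx i; have := hy i; have := h1 i hi; nlinarith
    rintro x ⟨hx, hc⟩
    exact (key hx).2 hc
  · apply convexHull_min
    · rintro x ⟨B, ⟨hB, hS, hT⟩, rfl⟩
      refine ⟨subset_convexHull ℝ _ ⟨B, hB, rfl⟩, fun i hi => ?_, fun i hi => ?_⟩
      · simp [eVec, Finset.disjoint_left.1 hS hi]
      · simp [eVec, hT hi]
    · rintro x ⟨hx, hx0, hx1⟩ y ⟨hy, hy0, hy1⟩ a b ha hb hab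
      refine ⟨(convex_convexHull ℝ _) hx hy ha hb hab, fun i hi => ?_, fun i hi => ?_⟩
      · simp [hx0 i hi, hy0 i hi]
      · simp [hx1 i hi, hy1 i hi, hab]

/-! ### Gale-minimal members -/

/-- A nonempty family of `k`-subsets of `U` given by upper bounds on the counts in the initial
segments of `≤_w` has a Gale-minimum. -/
lemma exists_gale_min {n : ℕ} (w : Equiv.Perm (Fin n)) (U : Finset (Fin n)) (k : ℕ)
    (a d : Fin n → ℕ) (G : Set (Finset (Fin n)))
    (hG : ∀ C, C ∈ G ↔ C ⊆ U ∧ C.card = k ∧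
      ∀ j, (C.filter fun t => w.symm t ≤ w.symm j).card + d j ≤ a j)
    (hne : G.Nonempty) : ∃ M ∈ G, ∀ C ∈ G, galeLE w M C := by
  obtain ⟨M, hM, hmin⟩ := exists_minimalFor_of_wellFoundedLT (· ∈ G)
    (fun C : Finset (Fin n) => ∑ i ∈ C, (w.symm i : ℕ)) hne
  refine ⟨M, hM, fun C hC => ?_⟩
  by_contra hcon
  obtain ⟨hMU, hMk, hMa⟩ := (hG M).1 hM
  obtain ⟨hCU, hCk, hCa⟩ := (hG C).1 hC
  -- The first position `j` at which the count of `C` exceeds that of `M`; then `j ∈ C \ M`.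
  obtain ⟨j, hj, hjmin⟩ : ∃ j, (M.filter fun t => w.symm t ≤ w.symm j).card <
        (C.filter fun t => w.symm t ≤ w.symm j).card ∧
      ∀ i, w.symm i < w.symm j → (C.filter fun t => w.symm t ≤ w.symm i).card ≤
        (M.filter fun t => w.symm t ≤ w.symm i).card := by
    unfold galeLE at hcon
    push Not at hcon
    obtain ⟨j, hj, hjm⟩ := exists_minimalFor_of_wellFoundedLT
      (fun j => (M.filter fun t => w.symm t ≤ w.symm j).card <
        (C.filter fun t => w.symm t ≤ w.symm j).card) (fun j => w.symm j) hcon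
    refine ⟨j, hj, fun i hi => ?_⟩
    by_contra hlt
    exact absurd (hjm (not_le.1 hlt) hi.le) (not_le.2 hi)
  have hlt : (C.filter fun t => w.symm t < w.symm j).card ≤
      (M.filter fun t => w.symm t < w.symm j).card := by
    rcases (C.filter fun t => w.symm t < w.symm j).eq_empty_or_nonempty with he | hne'
    · simp [he]
    · obtain ⟨t, ht, htmax⟩ := Finset.exists_max_image _ (fun t => w.symm t) hne'
      rw [Finset.mem_filter] at ht
      calc _ ≤ (C.filter fun s => w.symm s ≤ w.symm t).card := by
            apply Finset.card_le_card
            intro s hs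
            exact Finset.mem_filter.2 ⟨(Finset.mem_filter.1 hs).1, htmax s hs⟩
        _ ≤ (M.filter fun s => w.symm s ≤ w.symm t).card := hjmin t ht.2
        _ ≤ _ := by
            apply Finset.card_le_card
            intro s hs
            rw [Finset.mem_filter] at hs ⊢
            exact ⟨hs.1, hs.2.trans_lt ht.2⟩
  have hsplit : ∀ A : Finset (Fin n), (A.filter fun t => w.symm t ≤ w.symm j).card =
      (A.filter fun t => w.symm t < w.symm j).card + if j ∈ A then 1 else 0 := by
    intro A
    have hu : (A.filter fun t => w.symm t ≤ w.symm j) =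
        (A.filter fun t => w.symm t < w.symm j) ∪ (A.filter fun t => t = j) := by
      ext t
      simp only [Finset.mem_filter, Finset.mem_union, le_iff_lt_or_eq, w.symm.injective.eq_iff]
      tauto
    rw [hu, Finset.card_union_of_disjoint]
    · rw [Finset.filter_eq']
      split_ifs <;> simp
    · rw [Finset.disjoint_left]
      intro t h1 h2
      simp only [Finset.mem_filter] at h1 h2
      rw [h2.2] at h1
      exact lt_irrefl _ h1.2
  have hjC : j ∈ C := by
    by_contra hjC
    have h1 := hsplit C
    have h2 := hsplit M
    rw [if_neg hjC] at h1
    omega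
  have hjM : j ∉ M := by
    intro hjM
    have h1 := hsplit C
    have h2 := hsplit M
    rw [if_pos hjC] at h1
    rw [if_pos hjM] at h2
    omega
  -- The first element `q` of `M` after `j`; it exists as `M` and `C` have the same size.
  have hne' : (M.filter fun t => w.symm j < w.symm t).Nonempty := by
    by_contra hemp
    rw [Finset.not_nonempty_iff_eq_empty, Finset.filter_eq_empty_iff] at hemp
    have h1 : (M.filter fun t => w.symm t ≤ w.symm j) = M :=
      Finset.filter_true_of_mem fun t ht => not_lt.1 (hemp ht)
    have h2 := Finset.card_filter_le C fun t => w.symm t ≤ w.symm j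
    rw [h1] at hj
    omega
  obtain ⟨q, hq, hqmin⟩ := Finset.exists_min_image _ (fun t => w.symm t) hne'
  rw [Finset.mem_filter] at hq
  have hjq : j ∉ M.erase q := fun h => hjM (Finset.mem_of_mem_erase h)
  have hM' : insert j (M.erase q) ∈ G := by
    refine (hG _).2 ⟨?_, ?_, fun i => ?_⟩
    · exact Finset.insert_subset (hCU hjC) ((Finset.erase_subset _ _).trans hMU)
    · rw [Finset.card_insert_of_notMem hjq, Finset.card_erase_add_one hq.1, hMk]
    · rw [Finset.filter_insert, Finset.filter_erase]
      by_cases hji : w.symm j ≤ w.symm i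
      · rw [if_pos hji]
        by_cases hqi : w.symm q ≤ w.symm i
        · have h1 := Finset.card_insert_le j ((M.filter fun t => w.symm t ≤ w.symm i).erase q)
          have h2 := Finset.card_erase_add_one ((Finset.mem_filter (p := fun t => w.symm t ≤ w.symm i)).2 ⟨hq.1, hqi⟩)
          have := hMa i
          omega
        · -- Between `j` and `q` the count of `M` is constant, so below that of `C`.
          have h1 := Finset.card_insert_le j ((M.filter fun t => w.symm t ≤ w.symm i).erase q)
          have h2 := Finset.card_erase_le (s := M.filter fun t => w.symm t ≤ w.symm i) (a := q)
          have h3 : (M.filter fun t => w.symm t ≤ w.symm i) ⊆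
              (M.filter fun t => w.symm t ≤ w.symm j) := by
            intro t ht
            rw [Finset.mem_filter] at ht ⊢
            refine ⟨ht.1, not_lt.1 fun hlt => hqi ?_⟩
            exact (hqmin t (Finset.mem_filter.2 ⟨ht.1, hlt⟩)).trans ht.2
          have h4 : (C.filter fun t => w.symm t ≤ w.symm j) ⊆
              (C.filter fun t => w.symm t ≤ w.symm i) := by
            intro t ht
            rw [Finset.mem_filter] at ht ⊢
            exact ⟨ht.1, ht.2.trans hji⟩
          have := Finset.card_le_card h3
          have := Finset.card_le_card h4
          have := hCa i
          omega
      · rw [if_neg hji]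
        have := Finset.card_erase_le (s := M.filter fun t => w.symm t ≤ w.symm i) (a := q)
        have := hMa i
        omega
  have hsum : ∑ i ∈ insert j (M.erase q), (w.symm i : ℕ) < ∑ i ∈ M, (w.symm i : ℕ) := by
    rw [Finset.sum_insert hjq, ← Finset.add_sum_erase M (fun i => (w.symm i : ℕ)) hq.1]
    exact Nat.add_lt_add_right hq.2 _
  exact absurd (hmin hM' hsum.le) (not_le.2 hsum)

/-! ### Reordering the ground set -/

/-- Moving the complement of `U` to the front of the order turns the elements outside `U` into
loops and keeps the Gale order on subsets of `U`. -/
lemma exists_perm_gale {n : ℕ} (w : Equiv.Perm (Fin n)) (U M : Finset (Fin n)) (hM : M ⊆ U) :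
    ∃ w' : Equiv.Perm (Fin n), ∀ C, galeLE w' M C ↔ C ⊆ U ∧ galeLE w M C := by
  let f : Fin n → ℕ := fun i => if i ∈ U then n + w.symm i else w.symm i
  have hfU : ∀ i ∈ U, f i = n + w.symm i := fun i hi => if_pos hi
  have hfN : ∀ i, i ∉ U → f i < n := fun i hi => by
    simp only [f, if_neg hi]; exact (w.symm i).2
  have hfinj : Function.Injective f := by
    intro i j hij
    have hi := (w.symm i).2
    have hj := (w.symm j).2
    simp only [f] at hij
    apply w.symm.injective
    apply Fin.ext
    split_ifs at hij <;> omega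
  have hmono : StrictMono (f ∘ Tuple.sort f) :=
    (Tuple.monotone_sort f).strictMono_of_injective (hfinj.comp (Tuple.sort f).injective)
  have hle : ∀ i j, (Tuple.sort f).symm i ≤ (Tuple.sort f).symm j ↔ f i ≤ f j := by
    intro i j
    rw [← hmono.le_iff_le]
    simp
  have hUU : ∀ i ∈ U, ∀ j ∈ U, (f i ≤ f j ↔ w.symm i ≤ w.symm j) := by
    intro i hi j hj
    rw [hfU i hi, hfU j hj, Fin.le_def]
    omega
  have hUN : ∀ i ∈ U, ∀ j, j ∉ U → ¬ f i ≤ f j := by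
    intro i hi j hj
    have := hfU i hi
    have := hfN j hj
    omega
  have hcong : ∀ A ⊆ U, ∀ j ∈ U, (A.filter fun t => f t ≤ f j) =
      A.filter fun t => w.symm t ≤ w.symm j := fun A hA j hj =>
    Finset.filter_congr fun t ht => hUU t (hA ht) j hj
  refine ⟨Tuple.sort f, fun C => ?_⟩
  simp only [galeLE, hle]
  constructor
  · intro h
    have hCU : C ⊆ U := by
      intro c hc
      by_contra hcU
      have h1 := h c
      have h2 : (M.filter fun s => f s ≤ f c) = ∅ :=
        Finset.filter_eq_empty_iff.2 fun s hs => hUN s (hM hs) c hcU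
      have h3 : 0 < (C.filter fun t => f t ≤ f c).card :=
        Finset.card_pos.2 ⟨c, Finset.mem_filter.2 ⟨hc, le_rfl⟩⟩
      rw [h2, Finset.card_empty] at h1
      omega
    refine ⟨hCU, fun j => ?_⟩
    -- It suffices to compare counts at the last element of `C` up to `j`, which lies in `U`.
    rcases (C.filter fun t => w.symm t ≤ w.symm j).eq_empty_or_nonempty with he | hne
    · simp [he]
    · obtain ⟨t, ht, htmax⟩ := Finset.exists_max_image _ (fun t => w.symm t) hne
      rw [Finset.mem_filter] at ht
      have h1 := h t
      rw [hcong C hCU t (hCU ht.1), hcong M hM t (hCU ht.1)] at h1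
      refine le_trans (Finset.card_le_card ?_) (h1.trans (Finset.card_le_card ?_))
      · intro s hs
        exact Finset.mem_filter.2 ⟨(Finset.mem_filter.1 hs).1, htmax s hs⟩
      · intro s hs
        rw [Finset.mem_filter] at hs ⊢
        exact ⟨hs.1, hs.2.trans ht.2⟩
  · rintro ⟨hCU, h⟩ j
    by_cases hj : j ∈ U
    · rw [hcong C hCU j hj, hcong M hM j hj]
      exact h j
    · rw [Finset.filter_eq_empty_iff.2 fun s hs => hUN s (hCU hs) j hj]
      simp

/-! ### The face as a translated Schubert polytope -/

/-- Cutting the base polytope of a Schubert matroid by cube conditions `x_i = 0` (for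
`i ∈ S`) and `x_i = 1` (for `i ∈ T`), for disjoint `S, T`, yields either the empty set
or an integer translate of the base polytope of another Schubert matroid. -/
theorem schubert_face_cut_by_cube {n : ℕ} (ℬ : Set (Finset (Fin n)))
    (h : IsSchubertFamily ℬ) (S T : Finset (Fin n)) (hST : Disjoint S T) :
    {x ∈ BP ℬ | (∀ i ∈ S, x i = 0) ∧ ∀ i ∈ T, x i = 1} = ∅ ∨
    ∃ (ℬ' : Set (Finset (Fin n))) (m : Fin n → ℤ),
      IsSchubertFamily ℬ' ∧
      {x ∈ BP ℬ | (∀ i ∈ S, x i = 0) ∧ ∀ i ∈ T, x i = 1} =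
        (fun y => y + fun i => (m i : ℝ)) '' BP ℬ' := by
  rw [cube_face_eq]
  obtain ⟨w, S₀, hℬ⟩ := h
  -- The members `C` of `G` are the sets `B \ T` for the surviving bases `B`.
  set G : Set (Finset (Fin n)) := {C | Disjoint C T ∧ C ∪ T ∈ ℬ ∧ Disjoint S (C ∪ T)} with hGdef
  have hGim : {B ∈ ℬ | Disjoint S B ∧ T ⊆ B} = (fun C => C ∪ T) '' G := by
    ext B
    constructor
    · rintro ⟨hB, hS, hT⟩
      have : B \ T ∪ T = B := Finset.sdiff_union_of_subset hT
      refine ⟨B \ T, ⟨Finset.sdiff_disjoint, ?_, ?_⟩, this⟩ <;> rwa [this]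
    · rintro ⟨C, ⟨h1, h2, h3⟩, rfl⟩
      exact ⟨h2, h3, Finset.subset_union_right⟩
  rw [hGim]
  rcases G.eq_empty_or_nonempty with hemp | hne
  · left
    simp [hemp, BP]
  right
  obtain ⟨C₀, hC₀⟩ := hne
  have hG : ∀ C, C ∈ G ↔ C ⊆ (S ∪ T)ᶜ ∧ C.card = C₀.card ∧
      ∀ j, (C.filter fun t => w.symm t ≤ w.symm j).card +
        (T.filter fun t => w.symm t ≤ w.symm j).card ≤
        (S₀.filter fun t => w.symm t ≤ w.symm j).card := by
    intro C
    have hcard₀ : C₀.card + T.card = S₀.card := by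
      have h1 := hC₀.2.1
      rw [hℬ] at h1
      rw [← h1.1, Finset.card_union_of_disjoint hC₀.1]
    have hsub : C ⊆ (S ∪ T)ᶜ ↔ Disjoint C T ∧ Disjoint S (C ∪ T) := by
      rw [Finset.disjoint_union_right, le_compl_iff_disjoint_right,
        Finset.disjoint_union_right, disjoint_comm (a := S) (b := C)]
      tauto
    have hcnt : Disjoint C T → (C ∪ T ∈ ℬ ↔ C.card = C₀.card ∧
      ∀ j, (C.filter fun t => w.symm t ≤ w.symm j).card +
        (T.filter fun t => w.symm t ≤ w.symm j).card ≤
        (S₀.filter fun t => w.symm t ≤ w.symm j).card) := by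
      intro hd
      have h1 : ∀ j, ((C ∪ T).filter fun t => w.symm t ≤ w.symm j).card =
          (C.filter fun t => w.symm t ≤ w.symm j).card +
          (T.filter fun t => w.symm t ≤ w.symm j).card := by
        intro j
        rw [Finset.filter_union, Finset.card_union_of_disjoint (Finset.disjoint_filter_filter hd)]
      rw [hℬ]
      simp only [Set.mem_ofPred_eq, galeLE, h1, Finset.card_union_of_disjoint hd]
      refine and_congr ?_ Iff.rfl
      omega
    rw [hsub, hGdef, Set.mem_ofPred_eq]
    constructor
    · rintro ⟨h1, h2, h3⟩
      exact ⟨⟨h1, h3⟩, (hcnt h1).1 h2⟩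
    · rintro ⟨⟨h1, h3⟩, h2⟩
      exact ⟨h1, (hcnt h1).2 h2, h3⟩
  obtain ⟨M, hM, hMmin⟩ := exists_gale_min w _ _ _ _ G hG ⟨C₀, hC₀⟩
  have hM' := (hG M).1 hM
  obtain ⟨w', hw'⟩ := exists_perm_gale w (S ∪ T)ᶜ M hM'.1
  refine ⟨G, fun i => if i ∈ T then 1 else 0, ⟨w', M, ?_⟩, ?_⟩
  · ext C
    change C ∈ G ↔ C.card = M.card ∧ galeLE w' M C
    rw [hw']
    constructor
    · intro hC
      have := (hG C).1 hC
      exact ⟨this.2.1.trans hM'.2.1.symm, this.1, hMmin C hC⟩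
    · rintro ⟨h1, h2, h3⟩
      exact (hG C).2 ⟨h2, h1.trans hM'.2.1, fun j =>
        (Nat.add_le_add_right (h3 j) _).trans (hM'.2.2 j)⟩
  · have hm : (fun i => (((if i ∈ T then 1 else 0 : ℤ)) : ℝ)) = eVec T := by
      funext i
      simp [eVec]
    have hadd : ∀ C ∈ G, eVec (C ∪ T) = eVec T + eVec C := by
      intro C hC
      funext i
      have : i ∈ C → i ∉ T := fun hi => Finset.disjoint_left.1 hC.1 hi
      by_cases h1 : i ∈ C <;> by_cases h2 : i ∈ T <;> simp_all [eVec]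
    have hfun : (fun y : Fin n → ℝ => y + eVec T) = fun y => eVec T +ᵥ y := by
      funext y
      rw [vadd_eq_add, add_comm]
    rw [hm, hfun, Set.image_vadd, BP, BP, ← convexHull_vadd]
    congr 1
    ext x
    simp only [Set.mem_ofPred_eq, Set.mem_vadd_set, vadd_eq_add]
    constructor
    · rintro ⟨_, ⟨C, hC, rfl⟩, rfl⟩
      exact ⟨_, ⟨C, hC, rfl⟩, (hadd C hC).symm⟩
    · rintro ⟨_, ⟨C, hC, rfl⟩, rfl⟩
      exact ⟨_, ⟨C, hC, rfl⟩, (hadd C hC).symm⟩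
end

section
/- Let ℱ be the feasible family of a Schubert delta matroid on [n], and let S, T ⊆ [n] be disjoint subsets. Then the set F = {x ∈ FP(ℱ) : x_i = 0 for all i ∈ S and x_i = 1 for all i ∈ T} is either empty or equal to FP(ℱ') + m for the feasible family ℱ' of some Schubert delta matroid on [n] and some m ∈ ℤⁿ. -/
/-!
A point of `FP ℱ` on the cube face `x_i = 0 (i ∈ S)`, `x_i = 1 (i ∈ T)` is a convex combination of
those vertices `e_A` that lie on the face, since every vertex lies in the cube
(`FP_inter_cubeFace`). So the cut is `FP` of the subfamily of `A ∈ ℱ` disjoint from `S` and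
containing `T`, and it suffices that this subfamily is empty or again Schubert; the translation
is then by `0`.

Writing `A = σ(X Δ N)`, the condition on `A` prescribes `X ∩ P = Q` for `P = σ⁻¹(S ∪ T)` and some
`Q ⊆ P`. The sets `X ⪯ S₀` are the independent sets of a nested matroid, so the sets `U = X \ Q`
which remain are those `U ⊆ Pᶜ` with `|U ∩ [c, n]| ≤ |S₀ ∩ [c, n]| - |Q ∩ [c, n]|` for all `c`,
provided `Q ⪯ S₀`. The greedy algorithm, run on `Pᶜ` from the largest element down, produces a set
`S' ⊆ Pᶜ` such that these are exactly the `U ⊆ Pᶜ` with `U ⪯ S'` (`exists_greedy`). Reordering the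
ground set so that `P` comes on top turns the constraint `U ⊆ Pᶜ` into a consequence of the Gale
order (`exists_reorder`), and replacing `N` by `Q Δ N` accounts for adding `Q` back.
-/

open Finset

/-- The type `B` Gale order on subsets of `[n]`:
`A ⪯ B` iff for every `c`, `|{x ∈ A : x ≥ c}| ≤ |{x ∈ B : x ≥ c}|`. -/
def galeB {n : ℕ} (A B : Finset (Fin n)) : Prop :=
  ∀ c : Fin n, (A.filter fun x => c ≤ x).card ≤ (B.filter fun x => c ≤ x).card

/-- `ℱ` is the feasible family of a Schubert delta matroid on `[n]`: there are a subset
`S`, a permutation `σ` and a subset `N` such that `ℱ = {σ(T Δ N) : T ⪯ S}`. -/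
def IsSchubertDeltaFamily {n : ℕ} (ℱ : Set (Finset (Fin n))) : Prop :=
  ∃ (S : Finset (Fin n)) (σ : Equiv.Perm (Fin n)) (N : Finset (Fin n)),
    ℱ = (fun T : Finset (Fin n) => ((T \ N) ∪ (N \ T)).image σ) '' {T | galeB T S}

/-- The feasible polytope of a family of subsets of `[n]`. -/
noncomputable def FP {n : ℕ} (ℱ : Set (Finset (Fin n))) : Set (Fin n → ℝ) :=
  convexHull ℝ {x | ∃ F ∈ ℱ, x = eVec F}

/-! ### Nested matroids and the Gale order -/

/-- It is enough to test the Gale order at thresholds belonging to the smaller set. -/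
lemma galeB_of_forall_mem {n : ℕ} {U S : Finset (Fin n)}
    (h : ∀ c ∈ U, (U.filter fun x => c ≤ x).card ≤ (S.filter fun x => c ≤ x).card) :
    galeB U S := by
  intro c
  rcases (U.filter fun x => c ≤ x).eq_empty_or_nonempty with he | hne
  · simp [he]
  · -- the least element of `U` above `c` cuts out the same part of `U` as `c`
    obtain ⟨hm, hc⟩ := Finset.mem_filter.1 (Finset.min'_mem _ hne)
    set m := (U.filter fun x => c ≤ x).min' hne with hmdef
    calc (U.filter fun x => c ≤ x).card ≤ (U.filter fun x => m ≤ x).card := by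
          refine Finset.card_le_card fun x hx => ?_
          exact Finset.mem_filter.2 ⟨(Finset.mem_filter.1 hx).1, Finset.min'_le _ _ hx⟩
      _ ≤ (S.filter fun x => m ≤ x).card := h m hm
      _ ≤ (S.filter fun x => c ≤ x).card := by
          refine Finset.card_le_card fun x hx => ?_
          exact Finset.mem_filter.2
            ⟨(Finset.mem_filter.1 hx).1, hc.trans (Finset.mem_filter.1 hx).2⟩

/-- Greedy algorithm for nested matroids: the subsets of `R` satisfying arbitrary upper bounds
`f c` on the number of elements `≥ c` form a principal ideal of the Gale order on subsets of `R`. -/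
lemma exists_greedy {n : ℕ} (f : Fin n → ℕ) (R : Finset (Fin n)) :
    ∃ S' ⊆ R, ∀ U ⊆ R, (∀ c, (U.filter fun x => c ≤ x).card ≤ f c) ↔ galeB U S' := by
  induction R using Finset.induction_on_min with
  | empty =>
    refine ⟨∅, le_rfl, fun U hU => ?_⟩
    obtain rfl := Finset.subset_empty.1 hU
    simp [galeB]
  | insert a R ha ih =>
    obtain ⟨S₀, hS₀, H⟩ := ih
    have haR : a ∉ R := fun h => lt_irrefl _ (ha a h)
    have haS : a ∉ S₀ := fun h => haR (hS₀ h)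
    have hS₀f := (H S₀ hS₀).2 fun c => le_rfl
    have herase : ∀ U ⊆ insert a R, U.erase a ⊆ R := fun U hU => by
      intro x hx
      have := hU (Finset.mem_of_mem_erase hx)
      grind
    -- above `a` the element `a` does not matter; at or below `a` everything is counted
    have hhi : ∀ (U : Finset (Fin n)) (c : Fin n), a < c →
        (U.filter fun x => c ≤ x) = ((U.erase a).filter fun x => c ≤ x) := by
      intro U c hc; ext x
      simp only [Finset.mem_filter, Finset.mem_erase]
      constructor
      · rintro ⟨h1, h2⟩; exact ⟨⟨(hc.trans_le h2).ne', h1⟩, h2⟩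
      · rintro ⟨⟨_, h1⟩, h2⟩; exact ⟨h1, h2⟩
    have hlo : ∀ U ⊆ insert a R, ∀ c ≤ a, (U.filter fun x => c ≤ x) = U := by
      intro U hU c hc
      refine Finset.filter_true_of_mem fun x hx => ?_
      rcases Finset.mem_insert.1 (hU hx) with rfl | hx
      · exact hc
      · exact hc.trans (ha x hx).le
    have hmono : ∀ U : Finset (Fin n), ∀ c,
        ((U.erase a).filter fun x => c ≤ x).card ≤ (U.filter fun x => c ≤ x).card :=
      fun U c => Finset.card_le_card (Finset.filter_subset_filter _ (Finset.erase_subset _ _))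
    have hS₀' : S₀ ⊆ insert a R := hS₀.trans (Finset.subset_insert _ _)
    by_cases hins : ∀ c, ((insert a S₀).filter fun x => c ≤ x).card ≤ f c
    · refine ⟨insert a S₀, Finset.insert_subset_insert _ hS₀, fun U hU => ⟨fun hf c => ?_,
        fun hg c => (hg c).trans (hins c)⟩⟩
      have h1 : galeB (U.erase a) S₀ :=
        (H _ (herase U hU)).1 fun c => (hmono U c).trans (hf c)
      rcases lt_or_ge a c with hc | hc
      · rw [hhi U c hc, hhi (insert a S₀) c hc, Finset.erase_insert haS]
        exact h1 c
      · rw [hlo U hU c hc, hlo _ (Finset.insert_subset_insert _ hS₀) c hc,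
          Finset.card_insert_of_notMem haS]
        have h2 := h1 a
        rw [hlo S₀ hS₀' a le_rfl,
          hlo _ ((herase U hU).trans (Finset.subset_insert _ _)) a le_rfl] at h2
        have := Finset.pred_card_le_card_erase (s := U) (a := a)
        omega
    · refine ⟨S₀, hS₀', fun U hU => ⟨fun hf c => ?_, fun hg c => (hg c).trans (hS₀f c)⟩⟩
      have h1 : galeB (U.erase a) S₀ :=
        (H _ (herase U hU)).1 fun c => (hmono U c).trans (hf c)
      rcases lt_or_ge a c with hc | hc
      · rw [hhi U c hc]
        exact h1 c
      · rw [hlo U hU c hc, hlo S₀ hS₀' c hc]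
        push Not at hins
        obtain ⟨d, hd⟩ := hins
        -- the bound violated by `insert a S₀` sits at or below `a`, so it bounds all of `U`
        have hda : d ≤ a := by
          by_contra hda
          rw [hhi _ d (not_le.1 hda), Finset.erase_insert haS] at hd
          exact absurd (hS₀f d) (not_le.2 hd)
        rw [hlo _ (Finset.insert_subset_insert _ hS₀) d hda,
          Finset.card_insert_of_notMem haS] at hd
        have := hf d
        rw [hlo U hU d hda] at this
        omega

/-- After moving the complement of `R` to the top of the ground set, the sets `U ⊆ R` with
`U ⪯ S'` form an ideal of the Gale order on all subsets. -/
lemma exists_reorder {n : ℕ} (R S' : Finset (Fin n)) (hS' : S' ⊆ R) :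
    ∃ (τ : Equiv.Perm (Fin n)) (S'' : Finset (Fin n)),
      ∀ V, galeB V S'' ↔ (V.image τ ⊆ R ∧ galeB (V.image τ) S') := by
  -- sorting by the key `f` lists `R` first, then its complement, both in their original order
  let f : Fin n → ℕ := fun x => if x ∈ R then x else n + x
  have hinj : Function.Injective f := by
    intro x y hxy
    apply Fin.ext
    have := x.2; have := y.2
    simp only [f] at hxy
    split_ifs at hxy <;> omega
  let τ := Tuple.sort f
  have hmono : StrictMono (f ∘ τ) :=
    (Tuple.monotone_sort f).strictMono_of_injective (hinj.comp τ.injective)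
  have hle : ∀ i j, i ≤ j ↔ f (τ i) ≤ f (τ j) := fun i j => hmono.le_iff_le.symm
  have hcount : ∀ (V : Finset (Fin n)) (c : Fin n), (V.filter fun x => c ≤ x).card =
      ((V.image τ).filter fun x => f (τ c) ≤ f x).card := by
    intro V c
    rw [Finset.filter_image, Finset.card_image_of_injective _ τ.injective]
    simp only [hle]
  have hfR : ∀ c ∈ R, ∀ U ⊆ R,
      (U.filter fun x => f c ≤ f x) = (U.filter fun x => c ≤ x) := by
    intro c hc U hU
    refine Finset.filter_congr fun x hx => ?_
    simp [f, hc, hU hx]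
  have himg : (S'.image τ.symm).image τ = S' := by
    rw [Finset.image_image]; simp
  refine ⟨τ, S'.image τ.symm, fun V => ?_⟩
  have key : galeB V (S'.image τ.symm) ↔
      ∀ d, ((V.image τ).filter fun x => f d ≤ f x).card ≤
        (S'.filter fun x => f d ≤ f x).card := by
    unfold galeB
    simp only [hcount, himg]
    exact ⟨fun h d => by simpa using h (τ.symm d), fun h c => h (τ c)⟩
  rw [key]
  constructor
  · intro h
    have hsub : V.image τ ⊆ R := by
      intro x hx
      by_contra hxR
      have h0 : (S'.filter fun y => f x ≤ f y) = ∅ := by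
        refine Finset.filter_false_of_mem fun y hy => ?_
        have := y.2
        simp only [f, hxR, hS' hy, if_true, if_false]
        omega
      have h1 := h x
      rw [h0, Finset.card_empty, Nat.le_zero, Finset.card_eq_zero] at h1
      have h2 : x ∈ (V.image τ).filter fun y => f x ≤ f y := Finset.mem_filter.2 ⟨hx, le_rfl⟩
      rw [h1] at h2
      simp at h2
    refine ⟨hsub, galeB_of_forall_mem fun c hc => ?_⟩
    have := h c
    rwa [hfR c (hsub hc) _ hsub, hfR c (hsub hc) _ hS'] at this
  · rintro ⟨hsub, h⟩ d
    by_cases hd : d ∈ R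
    · rw [hfR d hd _ hsub, hfR d hd _ hS']
      exact h d
    · have h0 : ((V.image τ).filter fun y => f d ≤ f y) = ∅ := by
        refine Finset.filter_false_of_mem fun y hy => ?_
        have := y.2
        simp only [f, hd, hsub hy, if_true, if_false]
        omega
      simp [h0]

/-! ### Faces of the cube -/

/-- Cutting by a face of the cube keeps exactly the vertices on that face. -/
lemma FP_inter_cubeFace {n : ℕ} (ℱ : Set (Finset (Fin n))) (S T : Finset (Fin n)) :
    {x ∈ FP ℱ | (∀ i ∈ S, x i = 0) ∧ ∀ i ∈ T, x i = 1} =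
      FP {A ∈ ℱ | (∀ i ∈ S, i ∉ A) ∧ ∀ i ∈ T, i ∈ A} := by
  apply Set.Subset.antisymm
  · set G := {A ∈ ℱ | (∀ i ∈ S, i ∉ A) ∧ ∀ i ∈ T, i ∈ A} with hG
    -- the points of the cube which, if on the face, lie in `FP G`, form a convex set
    let C : Set (Fin n → ℝ) := {x | (∀ i, 0 ≤ x i ∧ x i ≤ 1) ∧
      (((∀ i ∈ S, x i = 0) ∧ ∀ i ∈ T, x i = 1) → x ∈ FP G)}
    have hconv : Convex ℝ C := by
      rw [convex_iff_forall_pos]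
      rintro x ⟨hx, hx'⟩ y ⟨hy, hy'⟩ a b ha hb hab
      have hcube : ∀ i, 0 ≤ (a • x + b • y) i ∧ (a • x + b • y) i ≤ 1 := fun i => by
        obtain ⟨h1, h2⟩ := hx i
        obtain ⟨h3, h4⟩ := hy i
        simp only [Pi.add_apply, Pi.smul_apply, smul_eq_mul]
        exact ⟨by positivity, by nlinarith⟩
      refine ⟨hcube, fun ⟨h0, h1⟩ => ?_⟩
      simp only [Pi.add_apply, Pi.smul_apply, smul_eq_mul] at h0 h1
      refine convex_convexHull ℝ _ (hx' ⟨fun i hi => ?_, fun i hi => ?_⟩)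
        (hy' ⟨fun i hi => ?_, fun i hi => ?_⟩) ha.le hb.le hab
      · have := h0 i hi; obtain ⟨h1, h2⟩ := hx i; obtain ⟨h3, h4⟩ := hy i
        nlinarith [mul_nonneg hb.le h3]
      · have := h1 i hi; obtain ⟨h1, h2⟩ := hx i; obtain ⟨h3, h4⟩ := hy i
        nlinarith [mul_nonneg hb.le (sub_nonneg.2 h4)]
      · have := h0 i hi; obtain ⟨h1, h2⟩ := hx i; obtain ⟨h3, h4⟩ := hy i
        nlinarith [mul_nonneg ha.le h1]
      · have := h1 i hi; obtain ⟨h1, h2⟩ := hx i; obtain ⟨h3, h4⟩ := hy i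
        nlinarith [mul_nonneg ha.le (sub_nonneg.2 h2)]
    have hsub : FP ℱ ⊆ C := by
      refine convexHull_min ?_ hconv
      rintro _ ⟨A, hA, rfl⟩
      refine ⟨fun i => by unfold eVec; split_ifs <;> norm_num, fun ⟨h0, h1⟩ => ?_⟩
      refine subset_convexHull ℝ _ ⟨A, ⟨hA, fun i hi => ?_, fun i hi => ?_⟩, rfl⟩
      · simpa [eVec] using h0 i hi
      · simpa [eVec] using h1 i hi
    rintro x ⟨hx, hx'⟩
    exact (hsub hx).2 hx'
  · have hconv : Convex ℝ {x : Fin n → ℝ | (∀ i ∈ S, x i = 0) ∧ ∀ i ∈ T, x i = 1} := by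
      rintro x ⟨hx, hx'⟩ y ⟨hy, hy'⟩ a b ha hb hab
      refine ⟨fun i hi => ?_, fun i hi => ?_⟩
      · simp [hx i hi, hy i hi]
      · simp [hx' i hi, hy' i hi, hab]
    refine convexHull_min ?_ ((convex_convexHull ℝ _).inter hconv)
    rintro _ ⟨A, ⟨hA, h0, h1⟩, rfl⟩
    exact ⟨subset_convexHull ℝ _ ⟨A, hA, rfl⟩, fun i hi => by simp [eVec, h0 i hi],
      fun i hi => by simp [eVec, h1 i hi]⟩

/-! ### Minors of Schubert families -/

lemma card_filter_union_of_disjoint {n : ℕ} {U Q : Finset (Fin n)} (h : Disjoint U Q)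
    (c : Fin n) : ((U ∪ Q).filter fun x => c ≤ x).card =
      (U.filter fun x => c ≤ x).card + (Q.filter fun x => c ≤ x).card := by
  rw [Finset.filter_union, Finset.card_union_of_disjoint (Finset.disjoint_filter_filter h)]

/-- The members of a Schubert family avoiding `S` and containing `T` again form a Schubert
family, unless there are none. -/
lemma IsSchubertDeltaFamily.restrict {n : ℕ} {ℱ : Set (Finset (Fin n))}
    (h : IsSchubertDeltaFamily ℱ) (S T : Finset (Fin n)) (hST : Disjoint S T) :
    {A ∈ ℱ | (∀ i ∈ S, i ∉ A) ∧ ∀ i ∈ T, i ∈ A} = ∅ ∨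
      IsSchubertDeltaFamily {A ∈ ℱ | (∀ i ∈ S, i ∉ A) ∧ ∀ i ∈ T, i ∈ A} := by
  obtain ⟨S₀, σ, N, rfl⟩ := h
  let R : Finset (Fin n) := univ.filter fun p => σ p ∉ S ∧ σ p ∉ T
  let Q : Finset (Fin n) := univ.filter fun p => (σ p ∈ S ∧ p ∈ N) ∨ (σ p ∈ T ∧ p ∉ N)
  have hdisj : ∀ i, i ∈ S → i ∉ T := fun _ hi => Finset.disjoint_left.1 hST hi
  have hRQ : Disjoint R Q := by
    rw [Finset.disjoint_left]
    intro p hp hq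
    simp only [R, Q, Finset.mem_filter, Finset.mem_univ, true_and] at hp hq
    tauto
  have hmem : ∀ (ρ : Equiv.Perm (Fin n)) (X : Finset (Fin n)) (i : Fin n),
      i ∈ X.image ρ ↔ ρ.symm i ∈ X := by
    intro ρ X i
    simp only [Finset.mem_image]
    exact ⟨by rintro ⟨a, ha, rfl⟩; simpa using ha, fun hi => ⟨_, hi, by simp⟩⟩
  -- the face condition on `σ (X Δ N)` says that `X` and `Q` agree outside `R`
  have hface : ∀ X : Finset (Fin n),
      ((∀ i ∈ S, i ∉ ((X \ N) ∪ (N \ X)).image σ) ∧ ∀ i ∈ T, i ∈ ((X \ N) ∪ (N \ X)).image σ) ↔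
        ∀ p ∉ R, (p ∈ X ↔ p ∈ Q) := by
    intro X
    simp only [hmem, R, Q, Finset.mem_union, Finset.mem_sdiff, Finset.mem_filter,
      Finset.mem_univ, true_and]
    constructor
    · rintro ⟨h0, h1⟩ p hp
      have h0 := h0 (σ p)
      have h1 := h1 (σ p)
      have := hdisj (σ p)
      simp only [Equiv.symm_apply_apply] at h0 h1
      tauto
    · intro h
      refine ⟨fun i hi => ?_, fun i hi => ?_⟩
      · have h1 := h (σ.symm i)
        have := hdisj i
        simp only [Equiv.apply_symm_apply] at h1
        tauto
      · have h1 := h (σ.symm i)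
        have := hdisj i
        simp only [Equiv.apply_symm_apply] at h1
        tauto
  have hsplit : ∀ X : Finset (Fin n), (∀ p ∉ R, (p ∈ X ↔ p ∈ Q)) → X = X ∩ R ∪ Q := by
    intro X hX
    ext p
    have h1 := hX p
    have h2 : p ∈ R → p ∉ Q := fun h => Finset.disjoint_left.1 hRQ h
    simp only [Finset.mem_union, Finset.mem_inter]
    tauto
  by_cases hQ : galeB Q S₀
  · right
    obtain ⟨S', hS', hgreedy⟩ := exists_greedy
      (fun c => (S₀.filter fun x => c ≤ x).card - (Q.filter fun x => c ≤ x).card) R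
    obtain ⟨τ, S'', hτ⟩ := exists_reorder R S' hS'
    have hkey : ∀ U ⊆ R, (galeB (U ∪ Q) S₀ ↔ galeB U S') := by
      intro U hU
      rw [← hgreedy U hU]
      refine forall_congr' fun c => ?_
      have := hQ c
      rw [card_filter_union_of_disjoint (Finset.disjoint_of_subset_left hU hRQ)]
      omega
    -- `U ∪ Q = U Δ Q`, so that `(U ∪ Q) Δ N = U Δ (Q Δ N)`
    have himage : ∀ V : Finset (Fin n), V.image τ ⊆ R →
        ((V \ ((Q \ N) ∪ (N \ Q)).image τ.symm) ∪
          (((Q \ N) ∪ (N \ Q)).image τ.symm \ V)).image (τ.trans σ) =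
        (((V.image τ ∪ Q) \ N) ∪ (N \ (V.image τ ∪ Q))).image σ := by
      intro V hV
      ext i
      have h2 : τ.symm (σ.symm i) ∈ V → σ.symm i ∉ Q := fun h =>
        Finset.disjoint_left.1 hRQ (hV ((hmem τ V _).2 h))
      simp only [hmem, Finset.mem_union, Finset.mem_sdiff, Equiv.symm_trans_apply,
        Equiv.symm_symm, Equiv.apply_symm_apply]
      tauto
    refine ⟨S'', τ.trans σ, ((Q \ N) ∪ (N \ Q)).image τ.symm, ?_⟩
    ext A
    constructor
    · rintro ⟨⟨X, hX, rfl⟩, hA⟩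
      have hXU := hsplit X ((hface X).1 hA)
      have himg : ((X ∩ R).image τ.symm).image τ = X ∩ R := by
        rw [Finset.image_image]; simp
      have hsub : ((X ∩ R).image τ.symm).image τ ⊆ R := by
        rw [himg]; exact Finset.inter_subset_right
      refine ⟨(X ∩ R).image τ.symm, (hτ _).2 ⟨hsub, ?_⟩, ?_⟩
      · rw [himg]
        refine (hkey _ Finset.inter_subset_right).1 ?_
        rw [← hXU]
        exact hX
      · refine (himage _ hsub).trans ?_
        rw [himg, ← hXU]
    · rintro ⟨V, hV, rfl⟩
      obtain ⟨hsub, hg⟩ := (hτ V).1 hV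
      have heq := himage V hsub
      simp only [Set.mem_ofPred_eq]
      rw [heq]
      refine ⟨⟨_, (hkey _ hsub).2 hg, rfl⟩, (hface _).2 fun p hp => ?_⟩
      have : p ∉ V.image τ := fun h => hp (hsub h)
      rw [Finset.mem_union]
      tauto
  · left
    rw [Set.eq_empty_iff_forall_notMem]
    rintro _ ⟨⟨X, hX, rfl⟩, hA⟩
    refine hQ fun c => le_trans (Finset.card_le_card ?_) (hX c)
    rw [hsplit X ((hface X).1 hA)]
    exact Finset.filter_subset_filter _ Finset.subset_union_right

/-- Cutting the feasible polytope of a Schubert delta matroid by cube conditions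
`x_i = 0` (for `i ∈ S`) and `x_i = 1` (for `i ∈ T`), for disjoint `S, T`, yields either
the empty set or an integer translate of the feasible polytope of another Schubert delta
matroid. -/
theorem schubert_delta_face_cut_by_cube {n : ℕ} (ℱ : Set (Finset (Fin n)))
    (h : IsSchubertDeltaFamily ℱ) (S T : Finset (Fin n)) (hST : Disjoint S T) :
    {x ∈ FP ℱ | (∀ i ∈ S, x i = 0) ∧ ∀ i ∈ T, x i = 1} = ∅ ∨
    ∃ (ℱ' : Set (Finset (Fin n))) (m : Fin n → ℤ),
      IsSchubertDeltaFamily ℱ' ∧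
      {x ∈ FP ℱ | (∀ i ∈ S, x i = 0) ∧ ∀ i ∈ T, x i = 1} =
        (fun y => y + fun i => (m i : ℝ)) '' FP ℱ' := by
  rw [FP_inter_cubeFace]
  rcases h.restrict S T hST with h0 | h0
  · left
    rw [h0]
    simp [FP]
  · refine Or.inr ⟨_, 0, h0, ?_⟩
    have hid : (fun y : Fin n → ℝ => y + fun i => (((0 : Fin n → ℤ) i : ℤ) : ℝ)) = id := by
      funext y i
      simp
    rw [hid, Set.image_id]
end

section
/- For every basis family ℬ of a loopless Schubert matroid on [n], there exist a basis family ℬ' of a loopless Schubert matroid on [n] and a vector m ∈ ℤⁿ such that the pointwise negation of the base polytope satisfies {−x : x ∈ BP(ℬ)} = BP(ℬ') + m. (In particular, the collection of base polytopes of loopless Schubert matroids, considered up to integer translation, is invariant under the map x ↦ −x.) -/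
/-!
Let `ℬ` be the Schubert family of `(w, S)`. Replacing each basis by its complement negates the
base polytope up to translation by the all-ones vector, and turns `S ≤_w T` into the Gale
inequality for the complements in the reversed order; but coloops of `ℬ` become loops of the dual.
They are turned back into coloops as follows. If `S` is everything, `ℬ = {[n]}` and the
translation is by `-2`. Otherwise let `a` be the last position (with respect to `w`) not occupied
by `S`; the coloops of `ℬ` are exactly the elements `C` placed strictly after `a`. The family `ℬ'`
of all `Tᶜ ∪ C` with `T ∈ ℬ` satisfies `e_{Tᶜ ∪ C} = 1 + e_C - e_T`, because `C ⊆ T`.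

`ℬ'` is the Schubert family of `Sᶜ ∪ C` for the order in which `x` has position `a - w⁻¹ x`
modulo `n`: the elements outside `C` come first, in reversed order, followed by `C`. This
construction is an involution on both the sets containing `C` and the permutations, with the same
`C`, so the single implication `flip_mem` yields both inclusions. Looplessness (`flip_loopless`)
holds because an element `x ∈ S` placed before `a` is missing from the basis obtained from `S` by
exchanging `x` for the element at position `a`.
-/

open Finset

/-! ### Complementation outside the coloops -/

/-- The elements placed strictly after position `a` in the order given by `w`. -/
def upper {n : ℕ} (w : Equiv.Perm (Fin n)) (a : Fin n) : Finset (Fin n) :=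
  univ.filter fun x => a < w.symm x

/-- Complementation outside `upper w a`, with `upper w a` itself kept in the set. -/
def flipSet {n : ℕ} (w : Equiv.Perm (Fin n)) (a : Fin n) (T : Finset (Fin n)) :
    Finset (Fin n) := Tᶜ ∪ upper w a

/-- The permutation in which `x` has position `a - w⁻¹ x` modulo `n`: the positions `0, …, a` are
reversed and the later ones stay last. -/
def flipPerm {n : ℕ} [NeZero n] (w : Equiv.Perm (Fin n)) (a : Fin n) : Equiv.Perm (Fin n) :=
  (Equiv.subLeft a).trans w

lemma flipPerm_symm {n : ℕ} [NeZero n] (w : Equiv.Perm (Fin n)) (a x : Fin n) :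
    (flipPerm w a).symm x = a - w.symm x := by
  rw [Equiv.symm_apply_eq]
  simp [flipPerm]

lemma flipPerm_flipPerm {n : ℕ} [NeZero n] (w : Equiv.Perm (Fin n)) (a : Fin n) :
    flipPerm (flipPerm w a) a = w := by
  ext x
  simp [flipPerm]

lemma val_sub_of_le {n : ℕ} {a p : Fin n} (h : p ≤ a) :
    (a - p).val = a.val - p.val := Fin.coe_sub_iff_le.2 h

lemma val_sub_of_lt {n : ℕ} {a p : Fin n} (h : a < p) :
    (a - p).val = n + a.val - p.val := Fin.coe_sub_iff_lt.2 h

lemma upper_flipPerm {n : ℕ} [NeZero n] (w : Equiv.Perm (Fin n)) (a : Fin n) :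
    upper (flipPerm w a) a = upper w a := by
  ext x
  simp only [upper, mem_filter, mem_univ, true_and, flipPerm_symm]
  have := (w.symm x).isLt
  rcases le_or_gt (w.symm x) a with h | h
  · have := val_sub_of_le h
    rw [Fin.lt_def, Fin.lt_def]
    rw [Fin.le_def] at h
    omega
  · have := val_sub_of_lt h
    rw [Fin.lt_def, Fin.lt_def]
    rw [Fin.lt_def] at h
    omega

lemma flipSet_flipSet {n : ℕ} (w : Equiv.Perm (Fin n)) (a : Fin n) {T : Finset (Fin n)}
    (hT : upper w a ⊆ T) : flipSet w a (flipSet w a T) = T := by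
  ext x
  have := @hT x
  simp only [flipSet, mem_union, mem_compl]
  tauto

/-- Complementary counting outside `upper w a`. -/
lemma card_filter_flipSet {n : ℕ} (w : Equiv.Perm (Fin n)) (a : Fin n) (T : Finset (Fin n))
    (P : Fin n → Prop) [DecidablePred P] (hP : ∀ x, P x → x ∉ upper w a) :
    ((flipSet w a T).filter P).card + (T.filter P).card = (univ.filter P).card := by
  rw [← card_union_of_disjoint]
  · congr 1
    ext x
    have := hP x
    simp only [flipSet, mem_union, mem_compl, mem_filter, mem_univ, true_and]
    tauto
  · rw [disjoint_left]
    intro x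
    have := hP x
    simp only [flipSet, mem_union, mem_compl, mem_filter]
    tauto

/-! ### The Gale order under complementation -/

/-- Gale inequalities for the strict initial segments. -/
lemma galeLE_lt {n : ℕ} {w : Equiv.Perm (Fin n)} {S T : Finset (Fin n)}
    (h : galeLE w S T) (p : Fin n) :
    (T.filter fun t => w.symm t < p).card ≤ (S.filter fun t => w.symm t < p).card := by
  rcases Nat.eq_zero_or_pos p.val with h0 | h0
  · have : ∀ q : Fin n, ¬ q < p := fun q hq => by rw [Fin.lt_def] at hq; omega
    simp [this]
  · have := h (w ⟨p.val - 1, by omega⟩)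
    simp only [Equiv.symm_apply_apply] at this
    have e : ∀ q : Fin n, q ≤ ⟨p.val - 1, by omega⟩ ↔ q < p := fun q => by
      rw [Fin.le_def, Fin.lt_def]; simp only; omega
    simpa only [e] using this

/-- A final segment contained in `S` consists of coloops. -/
lemma upper_subset {n : ℕ} {w : Equiv.Perm (Fin n)} {a : Fin n} {S T : Finset (Fin n)}
    (hS : upper w a ⊆ S) (hc : T.card = S.card) (h : galeLE w S T) : upper w a ⊆ T := by
  have h1 := h (w a)
  simp only [Equiv.symm_apply_apply] at h1
  have hs := card_filter_add_card_filter_not (s := S) (fun x => w.symm x ≤ a)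
  have ht := card_filter_add_card_filter_not (s := T) (fun x => w.symm x ≤ a)
  have e1 : S.filter (fun x => ¬ w.symm x ≤ a) = upper w a := by
    ext x
    have := @hS x
    simp only [upper, mem_filter, mem_univ, true_and, not_le] at this ⊢
    tauto
  have e2 : T.filter (fun x => ¬ w.symm x ≤ a) ⊆ upper w a := by
    intro x
    simp only [upper, mem_filter, mem_univ, true_and, not_le]
    tauto
  rw [e1] at hs
  rw [← eq_of_subset_of_card_le e2 (by omega)]
  exact filter_subset _ _

lemma card_flipSet {n : ℕ} {w : Equiv.Perm (Fin n)} {a : Fin n} {T : Finset (Fin n)}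
    (hT : upper w a ⊆ T) : (flipSet w a T).card + T.card = n + (upper w a).card := by
  rw [flipSet, card_union_of_disjoint]
  · have := card_compl_add_card T
    rw [Fintype.card_fin] at this
    omega
  · rw [disjoint_left]
    intro x hx hx'
    exact (mem_compl.1 hx) (hT hx')

lemma flip_mem {n : ℕ} [NeZero n] {w : Equiv.Perm (Fin n)} {a : Fin n} {S T : Finset (Fin n)}
    (hS : upper w a ⊆ S) (hc : T.card = S.card) (h : galeLE w S T) :
    (flipSet w a T).card = (flipSet w a S).card ∧
      galeLE (flipPerm w a) (flipSet w a S) (flipSet w a T) := by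
  have hT := upper_subset hS hc h
  have cS := card_flipSet hS
  have cT := card_flipSet hT
  refine ⟨by omega, fun j => ?_⟩
  simp only [flipPerm_symm]
  set p := w.symm j with hp
  rcases le_or_gt p a with hpa | hpa
  -- The initial segment consists of the elements in positions `p, …, a`.
  · have e : ∀ x, a - w.symm x ≤ a - p ↔ p ≤ w.symm x ∧ w.symm x ≤ a := by
      intro x
      have := (w.symm x).isLt
      have := val_sub_of_le hpa
      rw [Fin.le_def, Fin.le_def, Fin.le_def]
      rw [Fin.le_def] at hpa
      rcases le_or_gt (w.symm x) a with h | h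
      · have := val_sub_of_le h
        rw [Fin.le_def] at h
        omega
      · have := val_sub_of_lt h
        rw [Fin.lt_def] at h
        omega
    simp only [e]
    have hP : ∀ x, (p ≤ w.symm x ∧ w.symm x ≤ a) → x ∉ upper w a := by
      intro x hx
      simpa [upper] using hx.2
    have fS := card_filter_flipSet w a S _ hP
    have fT := card_filter_flipSet w a T _ hP
    have key : ∀ U : Finset (Fin n), upper w a ⊆ U →
        (U.filter fun x => w.symm x < p).card +
          (U.filter fun x => p ≤ w.symm x ∧ w.symm x ≤ a).card + (upper w a).card = U.card := by
      intro U hU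
      rw [← card_union_of_disjoint, ← card_union_of_disjoint]
      · congr 1
        ext x
        have := @hU x
        simp only [upper, mem_union, mem_filter, mem_univ, true_and] at this ⊢
        have h1 := lt_or_ge (w.symm x) p
        have h2 := lt_or_ge a (w.symm x)
        tauto
      · rw [disjoint_left]
        intro x
        simp only [upper, mem_union, mem_filter, mem_univ, true_and]
        rintro (⟨-, h1⟩ | ⟨-, -, h1⟩)
        · exact not_lt.2 (h1.le.trans hpa)
        · exact not_lt.2 h1
      · rw [disjoint_left]
        intro x
        simp only [mem_filter]
        rintro ⟨-, h1⟩ ⟨-, h2, -⟩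
        exact absurd h1 (not_lt.2 h2)
    have kS := key S hS
    have kT := key T hT
    have := galeLE_lt h p
    omega
  -- The complementary final segment lies in `upper w a`, hence in both flipped sets.
  · have e : ∀ x, ¬ a - w.symm x ≤ a - p → x ∈ upper w a := by
      intro x
      have := (w.symm x).isLt
      have := p.isLt
      have := val_sub_of_lt hpa
      simp only [upper, mem_filter, mem_univ, true_and]
      contrapose!
      intro h
      have := val_sub_of_le h
      rw [Fin.le_def]
      rw [Fin.lt_def] at hpa
      omega
    have fS := card_filter_add_card_filter_not (s := flipSet w a S)
      (fun x => a - w.symm x ≤ a - p)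
    have fT := card_filter_add_card_filter_not (s := flipSet w a T)
      (fun x => a - w.symm x ≤ a - p)
    have : (flipSet w a S).filter (fun x => ¬ a - w.symm x ≤ a - p) =
        (flipSet w a T).filter (fun x => ¬ a - w.symm x ≤ a - p) := by
      ext x
      have := e x
      simp only [flipSet, mem_filter, mem_union]
      tauto
    rw [this] at fS
    omega

/-! ### Looplessness -/

/-- Moving an element of `S` to a later free place goes up in the Gale order. -/
lemma galeLE_exchange {n : ℕ} {w : Equiv.Perm (Fin n)} {S : Finset (Fin n)} {x y : Fin n}
    (hx : x ∈ S) (hxy : w.symm x < w.symm y) : galeLE w S (insert y (S.erase x)) := by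
  intro j
  rw [filter_insert]
  split_ifs with hj
  · refine (card_insert_le _ _).trans ?_
    rw [filter_erase]
    have hm : x ∈ S.filter fun t => w.symm t ≤ w.symm j :=
      mem_filter.2 ⟨hx, hxy.le.trans hj⟩
    rw [card_erase_add_one hm]
  · exact card_le_card (filter_subset_filter _ (erase_subset _ _))

lemma flip_loopless {n : ℕ} {w : Equiv.Perm (Fin n)} {a : Fin n} {S : Finset (Fin n)}
    (ha : w a ∉ S) (x : Fin n) :
    ∃ T : Finset (Fin n), (T.card = S.card ∧ galeLE w S T) ∧ x ∈ flipSet w a T := by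
  by_cases hx : x ∈ flipSet w a S
  · exact ⟨S, ⟨rfl, fun _ => le_rfl⟩, hx⟩
  · simp only [flipSet, upper, mem_union, mem_compl, mem_filter, mem_univ, true_and, not_or,
      not_not, not_lt] at hx
    obtain ⟨hxS, hxa⟩ := hx
    have hne : x ≠ w a := fun h => ha (h ▸ hxS)
    have hlt : w.symm x < w.symm (w a) := by
      rw [Equiv.symm_apply_apply]
      exact lt_of_le_of_ne hxa fun h => hne (by rw [← h, Equiv.apply_symm_apply])
    refine ⟨insert (w a) (S.erase x), ⟨?_, galeLE_exchange hxS hlt⟩, ?_⟩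
    · rw [card_insert_of_notMem (fun h => ha (mem_of_mem_erase h)), card_erase_add_one hxS]
    · simp [flipSet, hne]

/-! ### Base polytopes -/

/-- An integer translation matching the vertices matches the base polytopes. -/
lemma neg_BP_eq {n : ℕ} (ℬ ℬ' : Set (Finset (Fin n))) (m : Fin n → ℝ)
    (h1 : ∀ B ∈ ℬ, ∃ B' ∈ ℬ', -eVec B = eVec B' + m)
    (h2 : ∀ B' ∈ ℬ', ∃ B ∈ ℬ, -eVec B = eVec B' + m) :
    (fun x => -x) '' BP ℬ = (fun y => y + m) '' BP ℬ' := by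
  have e2 : (fun y => y + m) '' BP ℬ' =
      convexHull ℝ ((fun y => y + m) '' {x | ∃ B ∈ ℬ', x = eVec B}) :=
    (AffineMap.id ℝ (Fin n → ℝ) + AffineMap.const ℝ _ m).image_convexHull _
  have e1 : (fun x => -x) '' BP ℬ =
      convexHull ℝ ((fun x => -x) '' {x | ∃ B ∈ ℬ, x = eVec B}) :=
    (-LinearMap.id : (Fin n → ℝ) →ₗ[ℝ] (Fin n → ℝ)).image_convexHull _
  rw [e1, e2]
  congr 1
  ext z
  constructor
  · rintro ⟨_, ⟨B, hB, rfl⟩, rfl⟩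
    obtain ⟨B', hB', h⟩ := h1 B hB
    exact ⟨_, ⟨B', hB', rfl⟩, h.symm⟩
  · rintro ⟨_, ⟨B', hB', rfl⟩, rfl⟩
    obtain ⟨B, hB, h⟩ := h2 B' hB'
    exact ⟨_, ⟨B, hB, rfl⟩, h⟩

lemma neg_eVec {n : ℕ} {w : Equiv.Perm (Fin n)} {a : Fin n} {T : Finset (Fin n)}
    (hT : upper w a ⊆ T) :
    -eVec T = eVec (flipSet w a T) +
      fun i => (((if i ∈ upper w a then -2 else -1 : ℤ)) : ℝ) := by
  ext i
  have := @hT i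
  by_cases h1 : i ∈ upper w a
  · simp [eVec, flipSet, h1, this h1]
    norm_num
  · by_cases h2 : i ∈ T <;> simp [eVec, flipSet, h1, h2]

/-- The pointwise negation of the base polytope of a loopless Schubert matroid is an
integer translate of the base polytope of another loopless Schubert matroid. -/
theorem neg_basePoly_loopless_schubert {n : ℕ} (ℬ : Set (Finset (Fin n)))
    (h : IsSchubertFamily ℬ) (hl : FamLoopless ℬ) :
    ∃ (ℬ' : Set (Finset (Fin n))) (m : Fin n → ℤ),
      IsSchubertFamily ℬ' ∧ FamLoopless ℬ' ∧
      (fun x => -x) '' BP ℬ = (fun y => y + fun i => (m i : ℝ)) '' BP ℬ' := by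
  obtain ⟨w, S, rfl⟩ := h
  by_cases hS : S = univ
  · refine ⟨_, fun _ => -2, ⟨w, S, rfl⟩, hl, ?_⟩
    have key : ∀ B ∈ {T : Finset (Fin n) | T.card = S.card ∧ galeLE w S T},
        -eVec B = eVec B + fun _ => (((-2 : ℤ)) : ℝ) := by
      rintro B ⟨hB, -⟩
      have hu : B = univ := by rw [← card_eq_iff_eq_univ, hB, hS, card_univ]
      ext i
      simp [eVec, hu]
      norm_num
    exact neg_BP_eq _ _ _ (fun B hB => ⟨B, hB, key B hB⟩) (fun B hB => ⟨B, hB, key B hB⟩)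
  · obtain ⟨y, hy⟩ : ∃ y, y ∉ S := by
      by_contra! hcon
      exact hS (eq_univ_of_forall hcon)
    obtain ⟨a, ha, hmax⟩ := exists_max_image (univ.filter fun p => w p ∉ S) id
      ⟨w.symm y, by simpa using hy⟩
    have ha' : w a ∉ S := by simpa using ha
    have hn : NeZero n := ⟨fun h0 => by have := a.isLt; omega⟩
    have hC : upper w a ⊆ S := by
      intro x hx
      by_contra hxS
      have h1 := hmax (w.symm x) (by simpa using hxS)
      simp only [upper, mem_filter, mem_univ, true_and] at hx
      exact absurd hx (not_lt.2 h1)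
    refine ⟨_, fun i => if i ∈ upper w a then -2 else -1,
      ⟨flipPerm w a, flipSet w a S, rfl⟩, fun x => ?_, ?_⟩
    · obtain ⟨T, ⟨hc, hT⟩, hx⟩ := flip_loopless ha' x
      exact ⟨_, flip_mem hC hc hT, hx⟩
    · refine neg_BP_eq _ _ _ (fun B hB => ?_) (fun B' hB' => ?_)
      · exact ⟨_, flip_mem hC hB.1 hB.2, neg_eVec (upper_subset hC hB.1 hB.2)⟩
      -- Apply the involution to `B'`.
      · have hC' : upper (flipPerm w a) a ⊆ flipSet w a S := by
          rw [upper_flipPerm]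
          exact subset_union_right
        have hs := upper_subset hC' hB'.1 hB'.2
        have hm := flip_mem hC' hB'.1 hB'.2
        have ef : ∀ U, flipSet (flipPerm w a) a U = flipSet w a U := fun U => by
          rw [flipSet, flipSet, upper_flipPerm]
        rw [upper_flipPerm] at hs
        rw [flipPerm_flipPerm, ef, ef, flipSet_flipSet w a hC] at hm
        refine ⟨flipSet w a B', hm, ?_⟩
        have := neg_eVec (T := flipSet w a B') (w := w) (a := a) subset_union_right
        rwa [flipSet_flipSet w a hs] at this
end
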